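/- Let d ≥ 3, 1 ≤ m ≤ d−2 and λ > 0 with χ(λ) := e^λ (m/(d+1) + (1 − m/(d+1)) q(d+1−m)) < 1. Then limsup_{N→∞} sup_{j∈ℤ, A∈A^j_m} (‖φ_j‖_∞ − 1) ≤ (e^λ − 1)/(1 − χ(λ)). -/

import Mathlib

open MeasureTheory Filter
open scoped ENNReal Classical

namespace DiscCyl

/-- The lattice `ℤ^{d+1}`. -/
abbrev Lat (d : ℕ) := Fin (d + 1) → ℤ

/-- The discrete cylinder `E = (ℤ/Nℤ)^d × ℤ`. -/
abbrev Cyl (d N : ℕ) := (Fin d → ZMod N) × ℤ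

instance (N : ℕ) : MeasurableSpace (ZMod N) := ⊤

instance (N : ℕ) : Countable (ZMod N) := by
  cases N with
  | zero => exact inferInstanceAs (Countable ℤ)
  | succ n => exact inferInstanceAs (Countable (Fin (n + 1)))

/-- The canonical projection `π_E : ℤ^{d+1} → E`. -/
def projE (d N : ℕ) (v : Lat d) : Cyl d N :=
  (fun i => (v i.castSucc : ZMod N), v (Fin.last d))

/-- The `2(d+1)` unit vectors `±e_i` of `ℤ^{d+1}`. -/
def unitVecs (d : ℕ) : Finset (Lat d) :=
  Finset.image (fun p : Fin (d + 1) × Bool => Pi.single p.1 (if p.2 then (1 : ℤ) else -1))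
    Finset.univ

/-- One-step transition probability of simple random walk on the cylinder:
each of the `2(d+1)` unit moves of `ℤ^{d+1}` is taken with probability `1/(2(d+1))`
and projected to `E`. -/
noncomputable def stepProb (d N : ℕ) (x y : Cyl d N) : ℝ≥0∞ :=
  (((unitVecs d).filter fun e => x + projE d N e = y).card : ℝ≥0∞) / (2 * (d + 1))

/-- `Pl` is the family of laws (indexed by the starting point) of simple random walk
on the cylinder `E = (ℤ/Nℤ)^d × ℤ`. -/
def IsCylRW (d N : ℕ) (Pl : Cyl d N → Measure (ℕ → Cyl d N)) : Prop :=
  (∀ x, IsProbabilityMeasure (Pl x)) ∧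
    ∀ (x : Cyl d N) (n : ℕ) (γ : ℕ → Cyl d N),
      Pl x {ω | ∀ i ≤ n, ω i = γ i} =
        (if γ 0 = x then 1 else 0) * ∏ i ∈ Finset.range n, stepProb d N (γ i) (γ (i + 1))

/-- The lattice `ℤ^ν`. -/
abbrev ZLat (ν : ℕ) := Fin ν → ℤ

/-- Unit vectors of `ℤ^ν`. -/
def zUnitVecs (ν : ℕ) : Set (ZLat ν) :=
  {v | ∃ i, v = Pi.single i 1 ∨ v = Pi.single i (-1)}

/-- One-step transition probability of simple random walk on `ℤ^ν`. -/
noncomputable def zStep (ν : ℕ) (x y : ZLat ν) : ℝ≥0∞ :=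
  if y - x ∈ zUnitVecs ν then (2 * ν : ℝ≥0∞)⁻¹ else 0

/-- `Ql` is the family of laws of simple random walk on `ℤ^ν`. -/
def IsLatRW (ν : ℕ) (Ql : ZLat ν → Measure (ℕ → ZLat ν)) : Prop :=
  (∀ x, IsProbabilityMeasure (Ql x)) ∧
    ∀ (x : ZLat ν) (n : ℕ) (γ : ℕ → ZLat ν),
      Ql x {ω | ∀ i ≤ n, ω i = γ i} =
        (if γ 0 = x then 1 else 0) * ∏ i ∈ Finset.range n, zStep ν (γ i) (γ (i + 1))

/-- `q(ν)`: the return probability to the origin of simple random walk on `ℤ^ν`. -/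
noncomputable def retProb (ν : ℕ) (Ql : ZLat ν → Measure (ℕ → ZLat ν)) : ℝ :=
  ((Ql 0) {ω | ∃ n : ℕ, 1 ≤ n ∧ ω n = 0}).toReal

/-- Entrance time `H_U` (with value `⊤` if `U` is never entered). -/
noncomputable def entT {X : Type*} (U : Set X) (ω : ℕ → X) : ℕ∞ :=
  sInf {t : ℕ∞ | ∃ n : ℕ, ω n ∈ U ∧ t = n}

/-- Exit time `T_U`. -/
noncomputable def exitT {X : Type*} (U : Set X) (ω : ℕ → X) : ℕ∞ :=
  entT Uᶜ ω

/-- `after t f ω = t + f (θ_t ω)`, with value `⊤` when `t = ⊤`. -/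
noncomputable def after {X : Type*} (t : ℕ∞) (f : (ℕ → X) → ℕ∞) (ω : ℕ → X) : ℕ∞ :=
  t.recTopCoe ⊤ fun m => (m : ℕ∞) + f fun k => ω (k + m)

/-- The block `C_j = (ℤ/Nℤ)^d × ([(j-3/4)N, (j+3/4)N] ∩ ℤ)`. -/
def Cblk (d N : ℕ) (j : ℤ) : Set (Cyl d N) :=
  {x | ((j : ℝ) - 3 / 4) * N ≤ (x.2 : ℝ) ∧ (x.2 : ℝ) ≤ ((j : ℝ) + 3 / 4) * N}

/-- The block `B_j = (ℤ/Nℤ)^d × [(j-1)N, (j+1)N]`. -/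
def Bblk (d N : ℕ) (j : ℤ) : Set (Cyl d N) :=
  {x | (j - 1) * (N : ℤ) ≤ x.2 ∧ x.2 ≤ (j + 1) * (N : ℤ)}

/-- The block `B̃_j = (ℤ/Nℤ)^d × [(j-2)N+1, (j+2)N-1]`. -/
def Btl (d N : ℕ) (j : ℤ) : Set (Cyl d N) :=
  {x | (j - 2) * (N : ℤ) + 1 ≤ x.2 ∧ x.2 ≤ (j + 2) * (N : ℤ) - 1}

/-- `D^j_1`: time of the first departure from `B̃_j` after the first return to `B_j`. -/
noncomputable def oneExc (d N : ℕ) (j : ℤ) (ω : ℕ → Cyl d N) : ℕ∞ :=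
  after (entT (Bblk d N j) ω) (exitT (Btl d N j)) ω

/-- `D^j_k`: time of the `k`-th departure from `B̃_j` (after successive returns to `B_j`). -/
noncomputable def DD (d N : ℕ) (j : ℤ) : ℕ → (ℕ → Cyl d N) → ℕ∞
  | 0, _ => 0
  | k + 1, ω => after (DD d N j k ω) (oneExc d N j) ω

/-- The law `P` of the walk with initial distribution uniform on `B_0`. -/
noncomputable def lawP (d N : ℕ) (Pl : Cyl d N → Measure (ℕ → Cyl d N)) :
    Measure (ℕ → Cyl d N) :=
  ((N : ℝ≥0∞) ^ d * (2 * N + 1))⁻¹ •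
    Measure.sum fun x : Cyl d N => if x ∈ Bblk d N 0 then Pl x else 0

/-- Nearest-neighbour adjacency on the cylinder. -/
def adj (d N : ℕ) (x y : Cyl d N) : Prop :=
  x ≠ y ∧ ∃ e ∈ unitVecs d, y = x + projE d N e

/-- `x` and `y` are connected by a nearest-neighbour path inside `S`. -/
def connIn (d N : ℕ) (S : Set (Cyl d N)) (x y : Cyl d N) : Prop :=
  Relation.ReflTransGen (fun a b => a ∈ S ∧ b ∈ S ∧ adj d N a b) x y

/-- `S` is a connected set. -/
def IsConnIn (d N : ℕ) (S : Set (Cyl d N)) : Prop :=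
  ∀ x ∈ S, ∀ y ∈ S, connIn d N S x y

/-- The boundary `∂U`. -/
def bdry (d N : ℕ) (U : Set (Cyl d N)) : Set (Cyl d N) :=
  {x | x ∉ U ∧ ∃ y ∈ U, adj d N x y}

/-- `ℓ^∞`-norm on `ℤ^{d+1}`. -/
def linf {d : ℕ} (v : Lat d) : ℕ := Finset.univ.sup fun i => (v i).natAbs

/-- `ℓ^∞`-distance induced on the cylinder. -/
noncomputable def cylDist (d N : ℕ) (x y : Cyl d N) : ℕ :=
  sInf {r : ℕ | ∃ v : Lat d, projE d N v = y - x ∧ linf v = r}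

/-- `S` has `ℓ^∞`-diameter at least `L`. -/
def diamGE (d N : ℕ) (S : Set (Cyl d N)) (L : ℕ) : Prop :=
  ∃ x ∈ S, ∃ y ∈ S, L ≤ cylDist d N x y

/-- `X_{[0,n]}`: the set of points visited up to time `n`. -/
def ran {X : Type*} (ω : ℕ → X) (n : ℕ) : Set X := {y | ∃ i ≤ n, ω i = y}

/-- The set of points visited up to the (possibly infinite) time `t`. -/
def ranE {X : Type*} (ω : ℕ → X) (t : ℕ∞) : Set X :=
  {y | ∃ i : ℕ, (i : ℕ∞) ≤ t ∧ ω i = y}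

/-- `L_m`: projections to `E` of `m`-dimensional affine coordinate lattices of `ℤ^{d+1}`. -/
def Lcoll (d N m : ℕ) : Set (Set (Cyl d N)) :=
  {F | ∃ I : Finset (Fin (d + 1)), I.card = m ∧ ∃ y : Lat d,
      F = (fun v => projE d N (y + v)) '' {v : Lat d | ∀ i ∉ I, v i = 0}}

/-- `A^j_m`: nonempty subsets of `C_j` contained in some `F ∈ L_m`. -/
def Adm (d N : ℕ) (j : ℤ) (m : ℕ) : Set (Finset (Cyl d N)) :=
  {A | A.Nonempty ∧ ↑A ⊆ Cblk d N j ∧ ∃ F ∈ Lcoll d N m, (↑A : Set (Cyl d N)) ⊆ F}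

/-- The segment `{x + k·e : 0 ≤ k ≤ L}` (addition via `π_E`). -/
def segment (d N : ℕ) (x : Cyl d N) (e : Lat d) (L : ℕ) : Set (Cyl d N) :=
  {y | ∃ k : ℕ, k ≤ L ∧ y = x + projE d N ((k : ℤ) • e)}

/-- The event `V_{K,j,t}` (with `k = ⌊t⌋` excursions). -/
def Vev (d N : ℕ) (K : ℝ) (j : ℤ) (k : ℕ) : Set (ℕ → Cyl d N) :=
  {ω | ∀ x ∈ Cblk d N j, ∀ e ∈ unitVecs d, ∃ i : ℕ, (i : ℝ) < Real.sqrt N ∧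
      ∀ l : ℕ, i ≤ l → l ≤ i + ⌊K * Real.log N⌋₊ →
        x + projE d N ((l : ℤ) • e) ∉ ranE ω (DD d N j k ω)}

/-- The event `U_{K,j,t}` (with `k = ⌊t⌋` excursions). -/
def Uev (d N : ℕ) (K : ℝ) (j : ℤ) (k : ℕ) : Set (ℕ → Cyl d N) :=
  {ω | ∀ F ∈ Lcoll d N 2, ∀ n : ℕ, (n : ℕ∞) ≤ DD d N j k ω →
      ∀ O₁ O₂ : Set (Cyl d N),
        O₁ ⊆ (F ∩ Cblk d N j) \ ran ω n → O₂ ⊆ (F ∩ Cblk d N j) \ ran ω n →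
        IsConnIn d N O₁ → IsConnIn d N O₂ →
        diamGE d N O₁ ⌊K * Real.log N⌋₊ → diamGE d N O₂ ⌊K * Real.log N⌋₊ →
        ∀ p ∈ O₁, ∀ q ∈ O₂, connIn d N ((F ∩ Cblk d N j) \ ran ω n) p q}

/-- A (finite) set `S` disconnects the cylinder. -/
def Disconnects (d N : ℕ) (S : Set (Cyl d N)) : Prop :=
  S.Finite ∧ ∃ M₀ : ℕ, ∀ M : ℕ, M₀ ≤ M → ∀ x y : Cyl d N,
    (M : ℤ) ≤ x.2 → y.2 ≤ -(M : ℤ) → ¬ connIn d N Sᶜ x y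

/-- The disconnection time `T_N`. -/
noncomputable def discT (d N : ℕ) (ω : ℕ → Cyl d N) : ℕ∞ :=
  sInf {t : ℕ∞ | ∃ n : ℕ, Disconnects d N (ran ω n) ∧ t = n}

/-- `r ≤ t` for `t : ℕ∞` and a real threshold `r` (trivially true when `t = ⊤`). -/
def geReal (t : ℕ∞) (r : ℝ) : Prop := ∀ n : ℕ, t = (n : ℕ∞) → r ≤ n

/-- `r < t` for `t : ℕ∞` and a real threshold `r` (trivially true when `t = ⊤`). -/
def gtReal (t : ℕ∞) (r : ℝ) : Prop := ∀ n : ℕ, t = (n : ℕ∞) → r < n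

/-- `φ_j(z) = E_z[exp(λ Σ_{x∈A} 1{H_x < T_{B̃_j}})]`. -/
noncomputable def phi (d N : ℕ) (Pl : Cyl d N → Measure (ℕ → Cyl d N)) (j : ℤ) (lam : ℝ)
    (A : Finset (Cyl d N)) (z : Cyl d N) : ℝ :=
  ∫ ω, Real.exp (lam * ∑ x ∈ A, if entT {x} ω < exitT (Btl d N j) ω then (1 : ℝ) else 0)
    ∂(Pl z)

/-- `‖φ_j‖_∞`. -/
noncomputable def phiSup (d N : ℕ) (Pl : Cyl d N → Measure (ℕ → Cyl d N)) (j : ℤ) (lam : ℝ)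
    (A : Finset (Cyl d N)) : ℝ :=
  ⨆ z : Cyl d N, phi d N Pl j lam A z

/-- `q_N = sup {P_z[H_F < T_{B̃_j}] : F ∈ L_m, z ∈ ∂F}`. -/
noncomputable def qNval (d N m : ℕ) (Pl : Cyl d N → Measure (ℕ → Cyl d N)) (j : ℤ) : ℝ :=
  sSup {r : ℝ | ∃ F ∈ Lcoll d N m, ∃ z ∈ bdry d N F,
      r = ((Pl z) {ω | entT F ω < exitT (Btl d N j) ω}).toReal}

/-- The times `τ_k`: `τ_0` is the entrance time of `(ℤ/Nℤ)^d × Nℤ`, and `τ_{k+1}` is the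
first time after `τ_k` at which the vertical component has moved by exactly `N`. -/
noncomputable def tauT (d N : ℕ) : ℕ → (ℕ → Cyl d N) → ℕ∞
  | 0, ω => entT {x : Cyl d N | (N : ℤ) ∣ x.2} ω
  | k + 1, ω =>
      (tauT d N k ω).recTopCoe ⊤ fun m =>
        sInf {t : ℕ∞ | ∃ n : ℕ, m < n ∧ ((ω n).2 - (ω m).2).natAbs = N ∧ t = n}

/-- `*`-adjacency on `ℤ²`. -/
def starAdj (x y : ℤ × ℤ) : Prop :=
  x ≠ y ∧ (x.1 - y.1).natAbs ≤ 1 ∧ (x.2 - y.2).natAbs ≤ 1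

/-!
If the walk started on `F` returns to `F` before leaving `B` with probability at most `p`, then the
number of visits to `F` before leaving `B` is dominated by a geometric variable, and a
Feynman–Kac supersolution bounds the exponential functional by `1 + (e^λ - 1) / (1 - e^λ p)`.

For `F` an `m`-dimensional lattice plane, projecting along `F` turns the walk into a lazy walk on
the torus `(ℤ/Nℤ)^ν` with `ν = d + 1 - m`, and `F` into a point. The Green function `G_N` of this
walk up to time `N²`, divided by its value at the point, would be a harmonic majorant of the
hitting probability of `F`, were it not for the mass left at time `N²`. That mass is `O(N^(-ν))`,
and is compensated by adding a multiple of a parabola in the vertical coordinate, of total size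
`O(N^(2-ν))` on `B̃_j`. Hence the return probability is at most `1 - 1 / G_N(0) + O(N^(2-ν))`.

Steps before time `N` do not see the torus, and a Fourier heat-kernel bound of order `k^(-ν/2)`,
summable for `ν ≥ 3`, dominates the remaining ones. So `G_N(0)` tends to the Green function of the
lazy walk on `ℤ^ν`, which is at most `1 / ((ν / (d + 1)) (1 - q(ν)))`, the first factor accounting
for the lazy steps, and the limit of the return bound is at most
`1 - (ν / (d + 1)) (1 - q(ν)) = m / (d + 1) + (1 - m / (d + 1)) q(ν)`.
-/

/-! ### Markov chains on a countable state space -/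

section MarkovFamily

variable {X : Type*}

/-- The set of paths which agree with `γ` up to time `n`. -/
def pathCylinder (n : ℕ) (γ : ℕ → X) : Set (ℕ → X) := {ω | ∀ i ≤ n, ω i = γ i}

/-- The path which starts at `x` and then follows `ω`, one unit of time later. -/
def consPath (x : X) (ω : ℕ → X) : ℕ → X
  | 0 => x
  | n + 1 => ω n

@[simp] theorem consPath_zero (x : X) (ω : ℕ → X) : consPath x ω 0 = x := rfl

@[simp] theorem consPath_succ (x : X) (ω : ℕ → X) (n : ℕ) : consPath x ω (n + 1) = ω n := rfl

theorem forall_le_succ_consPath {x : X} {ω : ℕ → X} {n : ℕ} {s : ℕ → X → Prop} :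
    (∀ i ≤ n + 1, s i (consPath x ω i)) ↔ s 0 x ∧ ∀ i ≤ n, s (i + 1) (ω i) := by
  refine ⟨fun h => ⟨h 0 (by simp), fun i hi => h (i + 1) (by simpa)⟩, ?_⟩
  rintro ⟨h₀, h⟩ (_ | i) hi
  exacts [h₀, h i (by simpa using hi)]

variable [MeasurableSpace X]

theorem measurable_consPath (x : X) : Measurable (consPath x) := by
  refine measurable_pi_iff.2 fun n => ?_
  cases n with
  | zero => exact measurable_const
  | succ n => exact measurable_pi_apply n

/-- `P` is the family of laws, indexed by the starting point, of the Markov chain with transition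
probabilities `p`. -/
structure IsMarkovFamily (p : X → X → ℝ≥0∞) (P : X → Measure (ℕ → X)) : Prop where
  isProbabilityMeasure : ∀ x, IsProbabilityMeasure (P x)
  measure_pathCylinder : ∀ n (γ : ℕ → X),
    P (γ 0) (pathCylinder n γ) = ∏ i ∈ Finset.range n, p (γ i) (γ (i + 1))

variable {p : X → X → ℝ≥0∞} {P : X → Measure (ℕ → X)}

theorem IsMarkovFamily.measure_pathCylinder_zero (hP : IsMarkovFamily p P) (γ : ℕ → X) :
    P (γ 0) (pathCylinder 0 γ) = 1 := by
  simpa using hP.measure_pathCylinder 0 γ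

variable [MeasurableSingletonClass X]

theorem measurableSet_pathCylinder (n : ℕ) (γ : ℕ → X) : MeasurableSet (pathCylinder n γ) := by
  have h : pathCylinder n γ = ⋂ i ∈ Set.Iic n, (fun ω : ℕ → X => ω i) ⁻¹' {γ i} := by
    ext ω
    simp [pathCylinder]
  rw [h]
  exact .biInter (Set.to_countable _) fun i _ => measurable_pi_apply i (measurableSet_singleton _)

theorem IsMarkovFamily.measure_pathCylinder_of_ne (hP : IsMarkovFamily p P) {x : X} {γ : ℕ → X}
    (h : γ 0 ≠ x) (n : ℕ) : P x (pathCylinder n γ) = 0 := by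
  have := hP.isProbabilityMeasure x
  have hstart : P x (pathCylinder 0 fun _ => x)ᶜ = 0 :=
    (prob_compl_eq_zero_iff (measurableSet_pathCylinder _ _)).2
      (hP.measure_pathCylinder_zero fun _ => x)
  refine measure_mono_null (fun ω hω => ?_) hstart
  exact fun hx => h ((hω 0 n.zero_le).symm.trans (hx 0 le_rfl))

variable [Countable X]

theorem ext_of_pathCylinder {μ ν : Measure (ℕ → X)} [IsFiniteMeasure μ]
    (h : ∀ n γ, μ (pathCylinder n γ) = ν (pathCylinder n γ)) : μ = ν := by
  have hproj : IsProjectiveMeasureFamily fun I : Finset ℕ => μ.map I.restrict :=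
    ProbabilityTheory.isProjectiveMeasureFamily_map_restrict
      fun i => (measurable_pi_apply i).aemeasurable
  refine IsProjectiveLimit.unique (P := fun I : Finset ℕ => μ.map I.restrict) (fun _ => rfl) ?_
  rw [isProjectiveLimit_nat_iff hproj]
  refine fun n => Measure.ext_of_singleton fun a => ?_
  have hpre : (Preorder.frestrictLe n : (ℕ → X) → _) ⁻¹' {a} =
      pathCylinder n fun i => if hi : i ∈ Finset.Iic n then a ⟨i, hi⟩ else a ⟨n, by simp⟩ := by
    ext ω
    simp +contextual [pathCylinder, funext_iff]
  rw [← Preorder.frestrictLe, Measure.map_apply (Preorder.measurable_frestrictLe n) (by simp),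
    Measure.map_apply (Preorder.measurable_frestrictLe n) (by simp), hpre, h]

namespace IsMarkovFamily

theorem tsum_eq_one (hP : IsMarkovFamily p P) (x : X) : ∑' y, p x y = 1 := by
  have hdisj : Pairwise (Function.onFun Disjoint
      fun y : X => pathCylinder 1 (consPath x fun _ => y)) := fun y z hyz =>
    Set.disjoint_left.2 fun ω hy hz => hyz ((hy 1 le_rfl).symm.trans (hz 1 le_rfl))
  have hunion : ⋃ y : X, pathCylinder 1 (consPath x fun _ => y) = pathCylinder 0 fun _ => x := by
    ext ω
    simp [pathCylinder, Nat.le_one_iff_eq_zero_or_eq_one]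
  calc ∑' y, p x y
      = ∑' y, P x (pathCylinder 1 (consPath x fun _ => y)) :=
        tsum_congr fun y => by simpa using (hP.measure_pathCylinder 1 (consPath x fun _ => y)).symm
    _ = P x (⋃ y, pathCylinder 1 (consPath x fun _ => y)) :=
        (measure_iUnion hdisj fun _ => measurableSet_pathCylinder _ _).symm
    _ = 1 := by rw [hunion, hP.measure_pathCylinder_zero fun _ => x]

theorem measure_pathCylinder_eq_tsum (hP : IsMarkovFamily p P) (x : X) (n : ℕ) (γ : ℕ → X) :
    P x (pathCylinder n γ) = ∑' y, p x y * P y (consPath x ⁻¹' pathCylinder n γ) := by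
  have := hP.isProbabilityMeasure
  by_cases hx : γ 0 = x
  · subst hx
    cases n with
    | zero =>
      have hpre : consPath (γ 0) ⁻¹' pathCylinder 0 γ = Set.univ := by
        ext ω
        simp [pathCylinder]
      simp [hpre, hP.tsum_eq_one, hP.measure_pathCylinder_zero]
    | succ n =>
      have hpre : consPath (γ 0) ⁻¹' pathCylinder (n + 1) γ =
          pathCylinder n fun i => γ (i + 1) := by
        ext ω
        exact (forall_le_succ_consPath (s := fun i y => y = γ i)).trans (and_iff_right rfl)
      rw [tsum_eq_single (γ 1) fun y hy => by
          rw [hpre, hP.measure_pathCylinder_of_ne hy.symm, mul_zero],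
        hpre, hP.measure_pathCylinder n fun i => γ (i + 1), hP.measure_pathCylinder,
        Finset.prod_range_succ', mul_comm]
  · have hpre : consPath x ⁻¹' pathCylinder n γ = ∅ :=
      Set.eq_empty_of_forall_notMem fun ω hω => hx (hω 0 n.zero_le).symm
    simp [hpre, hP.measure_pathCylinder_of_ne hx]

theorem eq_sum_map_consPath (hP : IsMarkovFamily p P) (x : X) :
    P x = Measure.sum fun y => p x y • (P y).map (consPath x) := by
  have := hP.isProbabilityMeasure x
  refine ext_of_pathCylinder fun n γ => ?_
  simp [Measure.sum_apply, measurableSet_pathCylinder, Measure.map_apply, measurable_consPath,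
    hP.measure_pathCylinder_eq_tsum x n γ]

theorem lintegral_eq_tsum (hP : IsMarkovFamily p P) (x : X) {f : (ℕ → X) → ℝ≥0∞}
    (hf : Measurable f) : ∫⁻ ω, f ω ∂P x = ∑' y, p x y * ∫⁻ ω, f (consPath x ω) ∂P y := by
  rw [hP.eq_sum_map_consPath x, lintegral_sum_measure]
  simp [lintegral_map hf (measurable_consPath x)]

theorem measure_eq_tsum (hP : IsMarkovFamily p P) (x : X) {s : Set (ℕ → X)}
    (hs : MeasurableSet s) : P x s = ∑' y, p x y * P y (consPath x ⁻¹' s) := by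
  rw [hP.eq_sum_map_consPath x, Measure.sum_apply _ hs]
  simp [Measure.map_apply (measurable_consPath x) hs]

end IsMarkovFamily

end MarkovFamily

/-! ### Hitting probabilities and Feynman–Kac weights -/

section HittingProbability

variable {X : Type*} [MeasurableSpace X]

/-- The probability, starting from `x`, that the chain ever visits `U`. -/
noncomputable def hitProb (P : X → Measure (ℕ → X)) (U : Set X) (x : X) : ℝ≥0∞ :=
  P x {ω | ∃ n, ω n ∈ U}

variable {p : X → X → ℝ≥0∞} {P : X → Measure (ℕ → X)}

theorem IsMarkovFamily.hitProb_le_one (hP : IsMarkovFamily p P) (U : Set X) (x : X) :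
    hitProb P U x ≤ 1 :=
  have := hP.isProbabilityMeasure x
  prob_le_one

theorem IsMarkovFamily.hitProb_of_mem (hP : IsMarkovFamily p P) {U : Set X} {x : X}
    (hx : x ∈ U) : hitProb P U x = 1 := by
  refine le_antisymm (hP.hitProb_le_one U x) ?_
  rw [← hP.measure_pathCylinder_zero fun _ => x]
  exact measure_mono fun ω hω => ⟨0, by simpa [hω 0 le_rfl] using hx⟩

variable [Countable X] [MeasurableSingletonClass X]

theorem measurableSet_exists_mem_from (U : Set X) (k : ℕ) :
    MeasurableSet {ω : ℕ → X | ∃ n, k ≤ n ∧ ω n ∈ U} := by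
  simp only [measurableSet_setOfPred]
  exact .exists fun n => .and (by fun_prop) ((Set.to_countable U).measurableSet.mem.comp
    (measurable_pi_apply n))

namespace IsMarkovFamily

theorem measure_return_eq_tsum (hP : IsMarkovFamily p P) (U : Set X) (x : X) :
    P x {ω | ∃ n, 1 ≤ n ∧ ω n ∈ U} = ∑' y, p x y * hitProb P U y := by
  have hpre : consPath x ⁻¹' {ω | ∃ n, 1 ≤ n ∧ ω n ∈ U} = {ω | ∃ n, ω n ∈ U} := by
    ext ω
    refine ⟨?_, fun ⟨n, hn⟩ => ⟨n + 1, by lia, hn⟩⟩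
    rintro ⟨_ | n, hn, hU⟩
    exacts [absurd hn (by lia), ⟨n, hU⟩]
  rw [hP.measure_eq_tsum x (measurableSet_exists_mem_from U 1), hpre]
  rfl

theorem hitProb_eq_tsum (hP : IsMarkovFamily p P) {U : Set X} {x : X} (hx : x ∉ U) :
    hitProb P U x = ∑' y, p x y * hitProb P U y := by
  have hpre : consPath x ⁻¹' {ω | ∃ n, ω n ∈ U} = {ω | ∃ n, ω n ∈ U} := by
    ext ω
    refine ⟨?_, fun ⟨n, hn⟩ => ⟨n + 1, hn⟩⟩
    rintro ⟨_ | n, hU⟩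
    exacts [absurd hU hx, ⟨n, hU⟩]
  have hmeas : MeasurableSet {ω : ℕ → X | ∃ n, ω n ∈ U} := by
    simpa using measurableSet_exists_mem_from U 0
  rw [hitProb, hP.measure_eq_tsum x hmeas, hpre]
  rfl

end IsMarkovFamily

end HittingProbability

section FeynmanKac

variable {X : Type*}

/-- The Feynman–Kac weight of the first `n` steps of a path: the product of the weights `w` of the
points visited until the first exit from `B`. -/
noncomputable def fkWeight (w : X → ℝ≥0∞) (B : Set X) (n : ℕ) (ω : ℕ → X) : ℝ≥0∞ :=
  ∏ k ∈ Finset.range n, if ∀ i ≤ k, ω i ∈ B then w (ω k) else 1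

variable {w : X → ℝ≥0∞} {B : Set X}

theorem fkWeight_succ_consPath_of_mem {x : X} (hx : x ∈ B) (n : ℕ) (ω : ℕ → X) :
    fkWeight w B (n + 1) (consPath x ω) = w x * fkWeight w B n ω := by
  simp only [fkWeight, Finset.prod_range_succ', mul_comm (w x),
    forall_le_succ_consPath (s := fun _ y => y ∈ B)]
  simp [hx]

theorem fkWeight_consPath_of_notMem {x : X} (hx : x ∉ B) (n : ℕ) (ω : ℕ → X) :
    fkWeight w B n (consPath x ω) = 1 :=
  Finset.prod_eq_one fun _ _ => if_neg fun h => hx (h 0 (Nat.zero_le _))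

theorem monotone_fkWeight (hw : ∀ x, 1 ≤ w x) (ω : ℕ → X) :
    Monotone fun n => fkWeight w B n ω := by
  refine monotone_nat_of_le_succ fun n => ?_
  rw [fkWeight, fkWeight, Finset.prod_range_succ]
  refine le_mul_of_one_le_right' ?_
  split_ifs
  exacts [hw _, le_rfl]

theorem exists_forall_mem_of_entT_lt_exitT {x : X} {ω : ℕ → X}
    (h : entT {x} ω < exitT B ω) : ∃ k, ω k = x ∧ ∀ i ≤ k, ω i ∈ B := by
  obtain ⟨_, ⟨k, hk, rfl⟩, hlt⟩ := sInf_lt_iff.1 h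
  refine ⟨k, hk, fun i hi => by_contra fun hB => ?_⟩
  have hexit : exitT B ω ≤ i := sInf_le ⟨i, hB, rfl⟩
  exact (hlt.trans_le hexit).not_ge (by exact_mod_cast hi)

/-- Distinct points of `A` are first visited at distinct times, each of which contributes a factor
`exp lam` to the weight. -/
theorem exists_ofReal_exp_le_fkWeight {lam : ℝ} (hlam : 0 ≤ lam) {A : Finset X} {F : Set X}
    (hA : ↑A ⊆ F) (ω : ℕ → X) :
    ∃ n, ENNReal.ofReal (Real.exp
        (lam * ∑ x ∈ A, if entT {x} ω < exitT B ω then (1 : ℝ) else 0)) ≤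
      fkWeight (fun x => if x ∈ F then ENNReal.ofReal (Real.exp lam) else 1) B n ω := by
  have hvisit : ∀ x, ∃ k, entT {x} ω < exitT B ω → ω k = x ∧ ∀ i ≤ k, ω i ∈ B := fun x => by
    by_cases h : entT {x} ω < exitT B ω
    · exact (exists_forall_mem_of_entT_lt_exitT h).imp fun _ hk _ => hk
    · exact ⟨0, fun h' => absurd h' h⟩
  choose τ hτ using hvisit
  have hcard : (A.filter fun x => entT {x} ω < exitT B ω).card ≤
      ((Finset.range (A.sup τ + 1)).filter fun k => (∀ i ≤ k, ω i ∈ B) ∧ ω k ∈ F).card := by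
    refine Finset.card_le_card_of_injOn τ (fun x hx => ?_) fun x hx y hy hxy => ?_
    · rw [Finset.mem_coe, Finset.mem_filter] at hx ⊢
      obtain ⟨hτx, hB⟩ := hτ x hx.2
      exact ⟨Finset.mem_range_succ_iff.2 (Finset.le_sup hx.1), hB,
        hτx.symm ▸ hA hx.1⟩
    · rw [Finset.mem_coe, Finset.mem_filter] at hx hy
      rw [← (hτ x hx.2).1, hxy, (hτ y hy.2).1]
  refine ⟨A.sup τ + 1, ?_⟩
  have hweight : fkWeight (fun x => if x ∈ F then ENNReal.ofReal (Real.exp lam) else 1) B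
      (A.sup τ + 1) ω = ENNReal.ofReal (Real.exp lam) ^ ((Finset.range (A.sup τ + 1)).filter
        fun k => (∀ i ≤ k, ω i ∈ B) ∧ ω k ∈ F).card := by
    simp only [fkWeight, ← ite_and, Finset.prod_ite, Finset.prod_const, one_pow, mul_one]
  rw [hweight, Finset.sum_boole, mul_comm, Real.exp_nat_mul, ENNReal.ofReal_pow (by positivity)]
  exact pow_le_pow_right₀ (by simpa using hlam) hcard

variable [MeasurableSpace X] [Countable X] [MeasurableSingletonClass X]
  {p : X → X → ℝ≥0∞} {P : X → Measure (ℕ → X)}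

theorem measurable_fkWeight (w : X → ℝ≥0∞) (B : Set X) (n : ℕ) :
    Measurable (fkWeight w B n) := by
  refine Finset.measurable_prod _ fun k _ => .ite ?_ ?_ measurable_const
  · simp only [measurableSet_setOfPred]
    exact .forall fun i => .imp (by fun_prop) ((Set.to_countable B).measurableSet.mem.comp
      (measurable_pi_apply i))
  · exact (measurable_of_countable w).comp (measurable_pi_apply k)

/-- Khas'minskii's argument: `h` is a supersolution of the Feynman–Kac equation. -/
theorem IsMarkovFamily.lintegral_fkWeight_le (hP : IsMarkovFamily p P) {h : X → ℝ≥0∞}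
    (hone : ∀ x, 1 ≤ h x) (hsuper : ∀ x ∈ B, w x * ∑' y, p x y * h y ≤ h x) (n : ℕ) (x : X) :
    ∫⁻ ω, fkWeight w B n ω ∂P x ≤ h x := by
  have := hP.isProbabilityMeasure
  induction n generalizing x with
  | zero => simpa [fkWeight] using hone x
  | succ n ih =>
    rw [hP.lintegral_eq_tsum x (measurable_fkWeight w B _)]
    by_cases hx : x ∈ B
    · calc ∑' y, p x y * ∫⁻ ω, fkWeight w B (n + 1) (consPath x ω) ∂P y
          = w x * ∑' y, p x y * ∫⁻ ω, fkWeight w B n ω ∂P y := by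
            simp only [fkWeight_succ_consPath_of_mem hx,
              lintegral_const_mul _ (measurable_fkWeight w B n), ← ENNReal.tsum_mul_left,
              mul_left_comm (w x)]
        _ ≤ w x * ∑' y, p x y * h y := by gcongr; exact ih _
        _ ≤ h x := hsuper x hx
    · simpa [fkWeight_consPath_of_notMem hx, hP.tsum_eq_one] using hone x

theorem IsMarkovFamily.integral_exp_card_hit_le (hP : IsMarkovFamily p P) {lam : ℝ}
    (hlam : 0 ≤ lam) {A : Finset X} {F : Set X} (hA : ↑A ⊆ F) {h : X → ℝ≥0∞}
    (hone : ∀ x, 1 ≤ h x)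
    (hsuper : ∀ x ∈ B,
      (if x ∈ F then ENNReal.ofReal (Real.exp lam) else 1) * ∑' y, p x y * h y ≤ h x)
    {z : X} (hz : h z ≠ ∞) :
    ∫ ω, Real.exp (lam * ∑ x ∈ A, if entT {x} ω < exitT B ω then (1 : ℝ) else 0) ∂P z ≤
      (h z).toReal := by
  set w : X → ℝ≥0∞ := fun x => if x ∈ F then ENNReal.ofReal (Real.exp lam) else 1
  have hw : ∀ x, 1 ≤ w x := fun x => by
    simp only [w]
    split_ifs
    exacts [by simpa using hlam, le_rfl]
  by_cases hmeas : AEStronglyMeasurable (fun ω => Real.exp (lam * ∑ x ∈ A,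
      if entT {x} ω < exitT B ω then (1 : ℝ) else 0)) (P z)
  · rw [integral_eq_lintegral_of_nonneg_ae (.of_forall fun _ => Real.exp_nonneg _) hmeas]
    refine ENNReal.toReal_mono hz ?_
    calc ∫⁻ ω, ENNReal.ofReal (Real.exp (lam * ∑ x ∈ A,
            if entT {x} ω < exitT B ω then (1 : ℝ) else 0)) ∂P z
        ≤ ∫⁻ ω, ⨆ n, fkWeight w B n ω ∂P z := lintegral_mono fun ω =>
          let ⟨n, hn⟩ := exists_ofReal_exp_le_fkWeight hlam hA ω
          hn.trans (le_iSup (fun n => fkWeight w B n ω) n)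
      _ = ⨆ n, ∫⁻ ω, fkWeight w B n ω ∂P z :=
          lintegral_iSup (measurable_fkWeight w B) fun _ _ hmn ω => monotone_fkWeight hw ω hmn
      _ ≤ h z := iSup_le fun n => hP.lintegral_fkWeight_le hone hsuper n z
  · rw [integral_non_aestronglyMeasurable hmeas]
    exact ENNReal.toReal_nonneg

end FeynmanKac

/-! ### Simple random walk on abelian groups -/

section NearestNeighbour

variable {ι κ G H : Type*} [Fintype ι] [Fintype κ] [AddCommGroup G] [AddCommGroup H]

/-- The averaging operator of simple random walk on an abelian group with steps `±e i`. The steps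
need not be distinct or nonzero: vanishing ones make the walk lazy. -/
noncomputable def nbrAvg (e : ι → G) : (G → ℝ) →ₗ[ℝ] (G → ℝ) where
  toFun f x := (∑ i, (f (x + e i) + f (x - e i))) / (2 * Fintype.card ι)
  map_add' f g := by
    ext x
    simp only [Pi.add_apply, ← add_div, ← Finset.sum_add_distrib]
    congr! 2
    ring
  map_smul' c f := by
    ext x
    simp [← mul_add, ← Finset.mul_sum, mul_div_assoc]

theorem nbrAvg_apply (e : ι → G) (f : G → ℝ) (x : G) :
    nbrAvg e f x = (∑ i, (f (x + e i) + f (x - e i))) / (2 * Fintype.card ι) := rfl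

theorem nbrAvg_mono (e : ι → G) : Monotone (nbrAvg e) := fun f g hfg x => by
  simp only [nbrAvg_apply]
  gcongr <;> exact hfg _

theorem nbrAvg_nonneg (e : ι → G) {f : G → ℝ} (hf : 0 ≤ f) : 0 ≤ nbrAvg e f := by
  simpa using nbrAvg_mono e hf

theorem nbrAvg_const [Nonempty ι] (e : ι → G) (c : ℝ) : nbrAvg e (fun _ => c) = fun _ => c := by
  ext x
  simp only [nbrAvg_apply, Finset.sum_const, Finset.card_univ, nsmul_eq_mul]
  field_simp
  ring

theorem nbrAvg_comp_add (e : ι → G) (e' : κ → H) (φ : G →+ H) (σ : ι ≃ κ)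
    (hφ : ∀ i, φ (e i) = e' (σ i)) (f : H → ℝ) (c : H) :
    nbrAvg e (fun x => f (φ x + c)) = fun x => nbrAvg e' f (φ x + c) := by
  ext x
  simp only [nbrAvg_apply, map_add, map_sub, hφ, Fintype.card_congr σ]
  rw [σ.sum_comp fun i => f (φ x + e' i + c) + f (φ x - e' i + c)]
  simp only [add_right_comm _ _ c, sub_add_eq_add_sub]

/-- The transition probabilities of simple random walk on an abelian group with steps `±e i`. -/
noncomputable def srwStep [DecidableEq G] (e : ι → G) (x y : G) : ℝ≥0∞ :=
  (∑ i, ((if x + e i = y then 1 else 0) + if x - e i = y then 1 else 0)) / (2 * Fintype.card ι)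

theorem tsum_srwStep_mul_ofReal [DecidableEq G] [Nonempty ι] (e : ι → G) {h : G → ℝ}
    (hh : 0 ≤ h) (x : G) :
    ∑' y, srwStep e x y * ENNReal.ofReal (h y) = ENNReal.ofReal (nbrAvg e h x) := by
  have hcard : (0 : ℝ) < 2 * Fintype.card ι := by positivity
  rw [nbrAvg_apply, ENNReal.ofReal_div_of_pos hcard,
    ENNReal.ofReal_sum_of_nonneg fun i _ => add_nonneg (hh _) (hh _)]
  have hh' : ∀ y, 0 ≤ h y := hh
  simp only [srwStep, ENNReal.div_eq_inv_mul, mul_assoc, ENNReal.tsum_mul_left, Finset.sum_mul,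
    add_mul, Summable.tsum_finsetSum fun _ _ => ENNReal.summable, ENNReal.tsum_add, ite_mul,
    one_mul, zero_mul, tsum_ite_eq', hh', ENNReal.ofReal_add]
  simp [ENNReal.ofReal_mul]

theorem injective_single_sign {ι : Type*} [DecidableEq ι] :
    Function.Injective fun p : ι × Bool => (Pi.single p.1 (if p.2 then 1 else -1) : ι → ℤ) := by
  rintro ⟨i, b⟩ ⟨j, c⟩ h
  have hi := congrFun h i
  by_cases hij : i = j
  · subst hij
    cases b <;> cases c <;> simp_all
  · cases b <;> simp [hij] at hi

theorem sum_single_sign [DecidableEq ι] (g : (ι → ℤ) → ℝ≥0∞) :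
    ∑ p : ι × Bool, g (Pi.single p.1 (if p.2 then 1 else -1)) =
      ∑ i, (g (Pi.single i 1) + g (-Pi.single i 1)) := by
  simp [Fintype.sum_prod_type, Pi.single_neg]

end NearestNeighbour

/-- The unit vectors `π_E(e_i)` of the cylinder. -/
def cylUnit (d N : ℕ) (i : Fin (d + 1)) : Cyl d N := projE d N (Pi.single i 1)

theorem projE_single (d N : ℕ) (i : Fin (d + 1)) :
    projE d N (Pi.single i 1) = cylUnit d N i := rfl

theorem projE_neg (d N : ℕ) (v : Lat d) : projE d N (-v) = -projE d N v := by
  ext <;> simp [projE]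

theorem stepProb_eq_srwStep (d N : ℕ) : stepProb d N = srwStep (cylUnit d N) := by
  ext x y
  rw [stepProb, Finset.card_filter, unitVecs, Finset.sum_image injective_single_sign.injOn,
    Nat.cast_sum]
  simp only [Nat.cast_ite, Nat.cast_one, Nat.cast_zero]
  rw [sum_single_sign fun v => if x + projE d N v = y then 1 else 0]
  simp only [srwStep, projE_neg, projE_single, ← sub_eq_add_neg, Fintype.card_fin,
    Nat.cast_add_one]
  rfl

theorem zStep_eq_srwStep (ν : ℕ) :
    zStep ν = srwStep fun i : Fin ν => (Pi.single i 1 : ZLat ν) := by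
  ext x y
  have hmem : y - x ∈ zUnitVecs ν ↔
      ∃ p : Fin ν × Bool, (Pi.single p.1 (if p.2 then 1 else -1) : ZLat ν) = y - x := by
    simp [zUnitVecs, eq_comm (a := y - x), or_comm]
  have hsum : ∑ p : Fin ν × Bool,
      (if (Pi.single p.1 (if p.2 then 1 else -1) : ZLat ν) = y - x then (1 : ℝ≥0∞) else 0) =
        if y - x ∈ zUnitVecs ν then 1 else 0 := by
    split_ifs with h
    · obtain ⟨p, hp⟩ := hmem.1 h
      simp [← hp, injective_single_sign.eq_iff]
    · exact Finset.sum_eq_zero fun p _ => if_neg fun hp => h (hmem.2 ⟨p, hp⟩)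
  rw [sum_single_sign fun v => if v = y - x then 1 else 0] at hsum
  have hstep : srwStep (fun i : Fin ν => (Pi.single i 1 : ZLat ν)) x y =
      (if y - x ∈ zUnitVecs ν then 1 else 0) / (2 * ν) := by
    rw [← hsum]
    simp only [srwStep, eq_sub_iff_add_eq', ← sub_eq_add_neg, Fintype.card_fin]
  rw [hstep, zStep]
  split_ifs <;> simp

theorem IsCylRW.isMarkovFamily {d N : ℕ} {P : Cyl d N → Measure (ℕ → Cyl d N)}
    (hP : IsCylRW d N P) : IsMarkovFamily (srwStep (cylUnit d N)) P where
  isProbabilityMeasure := hP.1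
  measure_pathCylinder n γ := by
    simpa [pathCylinder, stepProb_eq_srwStep] using hP.2 (γ 0) n γ

theorem IsLatRW.isMarkovFamily {ν : ℕ} {Q : ZLat ν → Measure (ℕ → ZLat ν)}
    (hQ : IsLatRW ν Q) : IsMarkovFamily (srwStep fun i : Fin ν => Pi.single i 1) Q where
  isProbabilityMeasure := hQ.1
  measure_pathCylinder n γ := by
    simpa [pathCylinder, zStep_eq_srwStep] using hQ.2 (γ 0) n γ

section HitMajorant

variable {ι G : Type*} [Fintype ι] [AddCommGroup G]

/-- A majorant, for simple random walk with steps `±e i`, of the probability to hit `F` before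
leaving `B`, which moreover shows that the return probability to `F` is at most `p`. -/
structure IsHitMajorant (e : ι → G) (B F : Set G) (p : ℝ) (g : G → ℝ) : Prop where
  nonneg : 0 ≤ g
  le_one : g ≤ 1
  eq_one : ∀ x ∈ B ∩ F, g x = 1
  superharmonic : ∀ x ∈ B \ F, nbrAvg e g x ≤ g x
  nbrAvg_le : ∀ x ∈ B ∩ F, nbrAvg e g x ≤ p

theorem IsHitMajorant.mono {e : ι → G} {B F : Set G} {p q : ℝ}
     {g : G → ℝ} (hg : IsHitMajorant e B F p g) (hpq : p ≤ q) :
    IsHitMajorant e B F q g :=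
  { hg with nbrAvg_le := fun x hx => (hg.nbrAvg_le x hx).trans hpq }

theorem isHitMajorant_inf_one [Nonempty ι] {e : ι → G} {B F : Set G} {p : ℝ} {u : G → ℝ}
    (hu : 0 ≤ u) (hone : ∀ x ∈ B ∩ F, 1 ≤ u x) (hsuper : ∀ x ∈ B \ F, nbrAvg e u x ≤ u x)
    (hp : ∀ x ∈ B ∩ F, nbrAvg e u x ≤ p) : IsHitMajorant e B F p (u ⊓ 1) where
  nonneg := le_inf hu zero_le_one
  le_one := inf_le_right
  eq_one x hx := min_eq_right (hone x hx)
  superharmonic x hx :=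
    le_min ((nbrAvg_mono e inf_le_left x).trans (hsuper x hx))
      ((nbrAvg_mono e inf_le_right x).trans_eq (congrFun (nbrAvg_const e 1) x))
  nbrAvg_le x hx := (nbrAvg_mono e inf_le_left x).trans (hp x hx)

variable [Nonempty ι] [DecidableEq G] [Countable G] [MeasurableSpace G]
  [MeasurableSingletonClass G]

theorem IsMarkovFamily.integral_exp_card_hit_le_of_isHitMajorant {e : ι → G}
    {P : G → Measure (ℕ → G)} (hP : IsMarkovFamily (srwStep e) P) {B F : Set G} {p : ℝ}
    {g : G → ℝ} (hg : IsHitMajorant e B F p g) {lam : ℝ} (hlam : 0 ≤ lam)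
    (hp : Real.exp lam * p < 1) {A : Finset G} (hA : ↑A ⊆ F) (z : G) :
    ∫ ω, Real.exp (lam * ∑ x ∈ A, if entT {x} ω < exitT B ω then (1 : ℝ) else 0) ∂P z ≤
      1 + (Real.exp lam - 1) / (1 - Real.exp lam * p) := by
  set s := (Real.exp lam - 1) / (1 - Real.exp lam * p) with hs
  have hs₀ : 0 ≤ s := div_nonneg (by linarith [Real.one_le_exp hlam]) (by linarith)
  have hs_eq : Real.exp lam * (1 + s * p) = 1 + s := by
    rw [hs]
    field_simp [show 1 - Real.exp lam * p ≠ 0 by linarith]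
    ring
  have hg₀ : ∀ x, 0 ≤ s * g x := fun x => mul_nonneg hs₀ (hg.nonneg x)
  have havg (x) : nbrAvg e (fun x => 1 + s * g x) x = 1 + s * nbrAvg e g x := by
    have : (fun x => 1 + s * g x) = (fun _ => 1) + s • g := rfl
    rw [this, map_add, map_smul, nbrAvg_const]
    rfl
  have hsuper : ∀ x ∈ B, (if x ∈ F then ENNReal.ofReal (Real.exp lam) else 1) *
      ∑' y, srwStep e x y * ENNReal.ofReal (1 + s * g y) ≤ ENNReal.ofReal (1 + s * g x) := by
    intro x hx
    rw [tsum_srwStep_mul_ofReal e (fun y => by simpa using (add_nonneg one_pos.le (hg₀ y))), havg]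
    split_ifs with hF
    · rw [← ENNReal.ofReal_mul (Real.exp_nonneg _), hg.eq_one x ⟨hx, hF⟩, mul_one, ← hs_eq]
      gcongr
      exact hg.nbrAvg_le x ⟨hx, hF⟩
    · rw [one_mul]
      gcongr
      exact hg.superharmonic x ⟨hx, hF⟩
  calc _ ≤ (ENNReal.ofReal (1 + s * g z)).toReal :=
        hP.integral_exp_card_hit_le hlam hA
          (fun x => by simpa using hg₀ x) hsuper ENNReal.ofReal_ne_top
    _ = 1 + s * g z := ENNReal.toReal_ofReal (by linarith [hg₀ z])
    _ ≤ 1 + s := add_le_add_right (mul_le_of_le_one_right hs₀ (hg.le_one z)) 1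

end HitMajorant

section WalkProb

variable {ι G H : Type*} [Fintype ι] [AddCommGroup G] [AddCommGroup H]

/-- The probability that simple random walk with steps `±e i` sits at `x` after `k` steps from the
origin, as a function of `x`. -/
noncomputable def walkProb (e : ι → G) (k : ℕ) : G → ℝ :=
  (nbrAvg e ^ k) (Set.indicator {0} 1)

/-- The Green function from the origin of the walk with steps `±e i`, truncated after `K` steps. -/
noncomputable def truncGreen (e : ι → G) (K : ℕ) : G → ℝ :=
  ∑ k ∈ Finset.range K, walkProb e k

theorem walkProb_zero (e : ι → G) : walkProb e 0 = Set.indicator {0} 1 := rfl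

theorem walkProb_succ (e : ι → G) (k : ℕ) : walkProb e (k + 1) = nbrAvg e (walkProb e k) := by
  rw [walkProb, pow_succ', Module.End.mul_apply, walkProb]

theorem walkProb_nonneg (e : ι → G) (k : ℕ) : 0 ≤ walkProb e k := by
  induction k with
  | zero => exact Set.indicator_nonneg fun _ _ => zero_le_one
  | succ k ih => exact walkProb_succ e k ▸ nbrAvg_nonneg e ih

theorem truncGreen_nonneg (e : ι → G) (K : ℕ) : 0 ≤ truncGreen e K :=
  Finset.sum_nonneg fun k _ => walkProb_nonneg e k

theorem truncGreen_succ (e : ι → G) (K : ℕ) :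
    truncGreen e (K + 1) = walkProb e 0 + nbrAvg e (truncGreen e K) := by
  simp only [truncGreen, Finset.sum_range_succ', walkProb_succ, map_sum, add_comm]

theorem one_le_truncGreen_zero (e : ι → G) {K : ℕ}
    (hK : 0 < K) : 1 ≤ truncGreen e K 0 := by
  obtain ⟨K, rfl⟩ := Nat.exists_eq_add_of_lt hK
  rw [zero_add, truncGreen_succ, Pi.add_apply, walkProb_zero]
  simpa using nbrAvg_nonneg e (truncGreen_nonneg e K) 0

theorem nbrAvg_truncGreen (e : ι → G) (K : ℕ) :
    nbrAvg e (truncGreen e K) = truncGreen e K - walkProb e 0 + walkProb e K := by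
  have h := truncGreen_succ e K
  rw [truncGreen, Finset.sum_range_succ, ← truncGreen] at h
  rw [sub_add_eq_add_sub, h, add_sub_cancel_left]

theorem mul_truncGreen_le {e : ι → G} {R : G → ℝ} {c : ℝ} (hR : 0 ≤ R)
    (h : nbrAvg e R + c • Set.indicator {0} 1 ≤ R) (K : ℕ) : c • truncGreen e K ≤ R := by
  induction K with
  | zero => simpa [truncGreen] using hR
  | succ K ih =>
    rw [truncGreen_succ, smul_add, ← map_smul, add_comm]
    exact (add_le_add_left (nbrAvg_mono e ih) _).trans h

theorem walkProb_comp_eq {e : ι → G} {e' : ι → H} {φ : G →+ H} (hφ : ∀ i, φ (e i) = e' i)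
    {ℓ : G → ℕ} {r : ℕ} (hadd : ∀ x i, ℓ (x + e i) ≤ ℓ x + 1)
    (hsub : ∀ x i, ℓ (x - e i) ≤ ℓ x + 1) (hinj : ∀ x, ℓ x < r → φ x = 0 → x = 0) {k : ℕ} {x : G}
    (hx : ℓ x + k < r) : walkProb e' k (φ x) = walkProb e k x := by
  induction k generalizing x with
  | zero =>
    have : φ x = 0 ↔ x = 0 := ⟨hinj x hx, by rintro rfl; exact map_zero φ⟩
    simp [walkProb_zero, Set.indicator_apply, this]
  | succ k ih =>
    simp only [walkProb_succ, nbrAvg_apply]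
    congr! 3 with i
    · rw [← hφ, ← map_add, ih (by have := hadd x i; lia)]
    · rw [← hφ, ← map_sub, ih (by have := hsub x i; lia)]

end WalkProb

section ProjStep

variable {ι : Type*} [DecidableEq ι]

/-- The unit vectors of `R^ι`, projected to the coordinates in `J`. The walk with these steps is
the projection of simple random walk; it is lazy as soon as `J` is not everything. -/
def projStep (R : Type*) [AddGroupWithOne R] (J : Finset ι) (i : ι) : J → R :=
  J.restrict (Pi.single i (1 : R) : ι → R)

theorem projStep_coe {R : Type*} [AddGroupWithOne R] {J : Finset ι} (i : J) :
    projStep R J i = Pi.single i 1 := by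
  ext j
  simp [projStep, Pi.single_apply]

theorem projStep_of_notMem {R : Type*} [AddGroupWithOne R] {J : Finset ι} {i : ι} (hi : i ∉ J) :
    projStep R J i = 0 := by
  ext j
  simp [projStep, Pi.single_eq_of_ne (ne_of_mem_of_not_mem j.2 hi)]

theorem nbrAvg_projStep [Fintype ι] {R : Type*} [CommRing R] {J : Finset ι} (hJ : J.Nonempty)
    (f : (J → R) → ℝ) :
    nbrAvg (projStep R J) f = (1 - (J.card : ℝ) / Fintype.card ι) • f +
      ((J.card : ℝ) / Fintype.card ι) • nbrAvg (fun j : J => Pi.single j 1) f := by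
  ext x
  have hι : (Fintype.card ι : ℝ) ≠ 0 := by
    have := hJ.card_pos.trans_le J.card_le_univ
    positivity
  have hJ' : (J.card : ℝ) ≠ 0 := by
    exact_mod_cast hJ.card_ne_zero
  have hin : ∑ i ∈ J, (f (x + projStep R J i) + f (x - projStep R J i)) =
      ∑ j : J, (f (x + Pi.single j 1) + f (x - Pi.single j 1)) := by
    rw [← Finset.sum_coe_sort J]
    simp only [projStep_coe]
  have hout : ∑ i ∈ Jᶜ, (f (x + projStep R J i) + f (x - projStep R J i)) =
      (Fintype.card ι - J.card) * (2 * f x) := by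
    rw [Finset.sum_congr rfl fun i hi => by rw [projStep_of_notMem (Finset.mem_compl.1 hi)],
      Finset.sum_const, Finset.card_compl, nsmul_eq_mul, Nat.cast_sub J.card_le_univ]
    simp [two_mul]
  simp only [nbrAvg_apply, Pi.add_apply, Pi.smul_apply, smul_eq_mul, ← Finset.sum_add_sum_compl J,
    hin, hout, Fintype.card_coe]
  field_simp
  ring

end ProjStep

section Lattice

theorem IsMarkovFamily.nbrAvg_toReal_hitProb {ι G : Type*} [Fintype ι] [Nonempty ι]
    [AddCommGroup G] [DecidableEq G] [Countable G] [MeasurableSpace G] [MeasurableSingletonClass G]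
    {e : ι → G} {P : G → Measure (ℕ → G)} (hP : IsMarkovFamily (srwStep e) P) (U : Set G) (x : G) :
    nbrAvg e (fun y => (hitProb P U y).toReal) x = (P x {ω | ∃ n, 1 ≤ n ∧ ω n ∈ U}).toReal := by
  have hfin (y) : hitProb P U y ≠ ∞ :=
    ne_top_of_le_ne_top ENNReal.one_ne_top (hP.hitProb_le_one U y)
  have hnonneg : 0 ≤ fun y => (hitProb P U y).toReal := fun _ => ENNReal.toReal_nonneg
  rw [hP.measure_return_eq_tsum, ← ENNReal.toReal_ofReal (nbrAvg_nonneg e hnonneg x),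
    ← tsum_srwStep_mul_ofReal e hnonneg]
  simp only [ENNReal.ofReal_toReal (hfin _)]

theorem IsLatRW.mul_truncGreen_projStep_le {ι : Type*} [Fintype ι] [DecidableEq ι] {ν : ℕ}
    [NeZero ν] {Q : ZLat ν → Measure (ℕ → ZLat ν)} (hQ : IsLatRW ν Q) {J : Finset ι}
    (hJ : J.card = ν) (K : ℕ) :
    ν / Fintype.card ι * (1 - retProb ν Q) * truncGreen (projStep ℤ J) K 0 ≤ 1 := by
  have hP := hQ.isMarkovFamily
  have hJ₀ : J.Nonempty := Finset.card_ne_zero.1 (hJ ▸ NeZero.ne ν)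
  let σ : J ≃ Fin ν := J.equivFinOfCardEq hJ
  let reindex : (J → ℤ) ≃+ ZLat ν := AddEquiv.arrowCongr σ (AddEquiv.refl ℤ)
  set h : ZLat ν → ℝ := fun y => (hitProb Q {0} y).toReal with hh
  set R : (J → ℤ) → ℝ := fun x => h (reindex x) with hR
  have hzero : R 0 = 1 := by
    simp only [hR, hh, map_zero, hP.hitProb_of_mem (Set.mem_singleton 0), ENNReal.toReal_one]
  have havg (x) : nbrAvg (fun j : J => Pi.single j 1) R x =
      nbrAvg (fun i : Fin ν => (Pi.single i 1 : ZLat ν)) h (reindex x) := by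
    have hsingle (j : J) : reindex (Pi.single j 1) = Pi.single (σ j) 1 := by
      ext i
      simp [reindex, Pi.single_apply, σ.symm_apply_eq]
    simpa using congrFun (nbrAvg_comp_add _ _ reindex.toAddMonoidHom σ hsingle h 0) x
  have havg_zero : nbrAvg (fun j : J => Pi.single j 1) R 0 = retProb ν Q := by
    rw [havg, map_zero, hP.nbrAvg_toReal_hitProb]
    rfl
  have havg_of_ne {x} (hx : x ≠ 0) : nbrAvg (fun j : J => Pi.single j 1) R x = R x := by
    have hx' : reindex x ∉ ({0} : Set (ZLat ν)) := by simpa using hx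
    rw [havg, hP.nbrAvg_toReal_hitProb, hP.measure_return_eq_tsum, ← hP.hitProb_eq_tsum hx']
  have hsuper : nbrAvg (projStep ℤ J) R +
      (ν / Fintype.card ι * (1 - retProb ν Q)) • Set.indicator {0} 1 ≤ R := by
    intro x
    rw [nbrAvg_projStep hJ₀, hJ]
    rcases eq_or_ne x 0 with rfl | hx
    · simp only [Set.indicator_singleton, Pi.one_apply, Pi.add_apply, Pi.smul_apply, hzero,
        smul_eq_mul, mul_one, havg_zero, Pi.single_eq_same]
      linarith
    · simp only [Set.indicator_singleton, Pi.one_apply, Pi.add_apply, Pi.smul_apply, smul_eq_mul,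
        havg_of_ne hx, Pi.single_eq_of_ne hx, mul_zero, add_zero]
      linarith
  have hR₀ : 0 ≤ R := fun _ => ENNReal.toReal_nonneg
  exact hzero ▸ mul_truncGreen_le hR₀ hsuper K 0

theorem walkProb_projStep_zmod {ι : Type*} [Fintype ι] [DecidableEq ι] {N : ℕ} {J : Finset ι}
    {k : ℕ} (hk : k < N) :
    walkProb (projStep (ZMod N) J) k 0 = walkProb (projStep ℤ J) k 0 := by
  let φ : (J → ℤ) →+ (J → ZMod N) := (Int.castAddHom (ZMod N)).compLeft J
  have hφ (i) : φ (projStep ℤ J i) = projStep (ZMod N) J i := by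
    ext j
    simp [φ, projStep, Pi.single_apply]
  let ℓ (x : J → ℤ) : ℕ := Finset.univ.sup fun j => (x j).natAbs
  have hle (x : J → ℤ) (j) : (x j).natAbs ≤ ℓ x :=
    Finset.le_sup (f := fun j => (x j).natAbs) (Finset.mem_univ j)
  have hstep (i j) : (projStep ℤ J i j).natAbs ≤ 1 := by
    rw [projStep, Finset.restrict, Pi.single_apply]
    split_ifs <;> simp
  have hadd (x i) : ℓ (x + projStep ℤ J i) ≤ ℓ x + 1 := Finset.sup_le fun j _ =>
    (Int.natAbs_add_le _ _).trans (add_le_add (hle x j) (hstep i j))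
  have hsub (x i) : ℓ (x - projStep ℤ J i) ≤ ℓ x + 1 := Finset.sup_le fun j _ =>
    (Int.natAbs_sub_le _ _).trans (add_le_add (hle x j) (hstep i j))
  have hinj (x) (hx : ℓ x < N) (h : φ x = 0) : x = 0 := by
    ext j
    have hdvd : (N : ℤ) ∣ x j := (ZMod.intCast_zmod_eq_zero_iff_dvd _ _).1 (congrFun h j)
    exact Int.natAbs_eq_zero.1 <|
      Nat.eq_zero_of_dvd_of_lt (Int.natCast_dvd.1 hdvd) ((hle x j).trans_lt hx)
  have hℓ : ℓ 0 = 0 := by simp [ℓ]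
  simpa using walkProb_comp_eq hφ hadd hsub hinj (x := 0) (k := k) (by lia)

end Lattice

/-! ### Heat-kernel bound on the torus -/

section AddChar

variable {ι G : Type*} [Fintype ι] [AddCommGroup G]

/-- The eigenvalue of the averaging operator with steps `±e i` on the real part of the
character `ψ`. -/
noncomputable def charEigenvalue (e : ι → G) (ψ : AddChar G ℂ) : ℝ :=
  (∑ i, (ψ (e i)).re) / Fintype.card ι

theorem nbrAvg_re_addChar [Finite G] (e : ι → G) (ψ : AddChar G ℂ) :
    nbrAvg e (fun x => (ψ x).re) = charEigenvalue e ψ • fun x => (ψ x).re := by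
  ext x
  have hstep (i) : (ψ (x + e i)).re + (ψ (x - e i)).re = 2 * ((ψ (e i)).re * (ψ x).re) := by
    simp only [sub_eq_add_neg, AddChar.map_add_eq_mul, AddChar.map_neg_eq_conj, Complex.mul_re,
      Complex.conj_re, Complex.conj_im]
    ring
  simp only [nbrAvg_apply, hstep, ← Finset.mul_sum, ← Finset.sum_mul, charEigenvalue,
    Pi.smul_apply, smul_eq_mul]
  rw [mul_div_mul_left _ _ two_ne_zero, div_mul_eq_mul_div]

variable [Fintype G]

theorem walkProb_eq_sum_addChar (e : ι → G) (k : ℕ) :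
    walkProb e k = (Fintype.card G : ℝ)⁻¹ •
      ∑ ψ : AddChar G ℂ, charEigenvalue e ψ ^ k • fun x => (ψ x).re := by
  induction k with
  | zero =>
    ext x
    have hsum : ∑ ψ : AddChar G ℂ, (ψ x).re = if x = 0 then (Fintype.card G : ℝ) else 0 := by
      rw [← Complex.re_sum, AddChar.sum_apply_eq_ite]
      split_ifs <;> simp
    simp [walkProb_zero, hsum, Set.indicator_apply]
  | succ k ih =>
    simp only [walkProb_succ, ih, map_smul, map_sum, nbrAvg_re_addChar, smul_smul, pow_succ]

theorem walkProb_le_sum_addChar (e : ι → G) (k : ℕ) (x : G) :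
    walkProb e k x ≤ (Fintype.card G : ℝ)⁻¹ * ∑ ψ : AddChar G ℂ, |charEigenvalue e ψ| ^ k := by
  simp only [walkProb_eq_sum_addChar, Pi.smul_apply, Finset.sum_apply, smul_eq_mul]
  gcongr with ψ
  rw [← abs_pow]
  refine (le_abs_self _).trans ?_
  rw [abs_mul]
  exact mul_le_of_le_one_right (abs_nonneg _)
    ((Complex.abs_re_le_norm _).trans (ψ.norm_apply x).le)

end AddChar

theorem abs_sum_div_card_le_exp {ι : Type*} [Fintype ι] {c : ι → ℝ} (hc : ∀ i, |c i| ≤ 1) {i₀ : ι}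
    (hi₀ : c i₀ = 1) :
    |(∑ i, c i) / Fintype.card ι| ≤ Real.exp (-((∑ i, (1 - c i)) / Fintype.card ι ^ 2)) := by
  have := Nonempty.intro i₀
  set n : ℝ := (Fintype.card ι : ℝ) with hn
  have hn₁ : 1 ≤ n := Nat.one_le_cast.2 Fintype.card_pos
  set s := ∑ i, (1 - c i) with hs
  have hsum : ∑ i, c i = n - s := by simp [hs, hn]
  have hs₀ : 0 ≤ s := Finset.sum_nonneg fun i _ => by linarith [le_of_abs_le (hc i)]
  have hs₁ : s ≤ 2 * (n - 1) := by
    have hcard : n - 1 = (Finset.univ.erase i₀).card := by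
      simp [Finset.card_erase_of_mem, hn, Nat.cast_sub Fintype.card_pos]
    rw [hs, ← Finset.add_sum_erase _ _ (Finset.mem_univ i₀), hi₀, sub_self, zero_add, hcard,
      mul_comm, ← nsmul_eq_mul]
    exact Finset.sum_le_card_nsmul _ _ 2 fun i _ => by linarith [neg_le_of_abs_le (hc i)]
  have havg : (n - s) / n = 1 - s / n := by field_simp
  refine le_trans ?_ (Real.add_one_le_exp _)
  rw [hsum, havg, abs_le]
  constructor
  · have : s / n ^ 2 + s / n ≤ 2 - 2 / n ^ 2 := by
      calc s / n ^ 2 + s / n = s * (n + 1) / n ^ 2 := by field_simp; ring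
        _ ≤ 2 * (n - 1) * (n + 1) / n ^ 2 := by gcongr
        _ = 2 - 2 / n ^ 2 := by field_simp; ring
    have : 0 ≤ 2 / n ^ 2 := by positivity
    linarith
  · have : s / n ^ 2 ≤ s / n := by
      gcongr
      exact le_self_pow₀ hn₁ two_ne_zero
    linarith

theorem sum_addChar_pi_prod_le {κ G : Type*} [Fintype κ] [DecidableEq κ] [AddCommGroup G]
    [Finite G] {g : AddChar G ℂ → ℝ} (hg : 0 ≤ g) :
    ∑ ψ : AddChar (κ → G) ℂ, ∏ j, g (ψ.compAddMonoidHom (AddMonoidHom.single (fun _ => G) j)) ≤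
      (∑ ψ : AddChar G ℂ, g ψ) ^ Fintype.card κ := by
  let F (ψ : AddChar (κ → G) ℂ) (j : κ) : AddChar G ℂ :=
    ψ.compAddMonoidHom (AddMonoidHom.single (fun _ => G) j)
  have hF : Function.Injective F := by
    intro ψ ψ' h
    refine AddChar.toAddMonoidHomEquiv.injective (AddMonoidHom.functions_ext _ _ _ fun j y => ?_)
    exact DFunLike.congr_fun (congrFun h j) y
  calc _ = ∑ f ∈ Finset.univ.image F, ∏ j, g (f j) := (Finset.sum_image hF.injOn).symm
    _ ≤ ∑ f : κ → AddChar G ℂ, ∏ j, g (f j) :=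
        Finset.sum_le_univ_sum_of_nonneg fun f => Finset.prod_nonneg fun j _ => hg _
    _ = _ := by
        rw [← Fintype.piFinset_univ, ← Finset.prod_univ_sum, Finset.prod_const, Finset.card_univ]

section Cosine

theorem exp_neg_mul_one_sub_cos_le {t θ : ℝ} (ht : 0 ≤ t) (hθ : |θ| ≤ Real.pi) :
    Real.exp (-(t * (1 - Real.cos θ))) ≤ 2 * Real.exp (-(√(2 * t) / Real.pi * |θ|)) := by
  set u := √(2 * t) / Real.pi * |θ| with hu
  have hsq : u ^ 2 ≤ t * (1 - Real.cos θ) := by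
    have : u ^ 2 = t * (2 / Real.pi ^ 2 * θ ^ 2) := by
      rw [hu, mul_pow, div_pow, Real.sq_sqrt (by positivity), sq_abs]
      ring
    rw [this]
    gcongr
    linarith [Real.cos_le_one_sub_mul_cos_sq hθ]
  have hlog : (1 / 4 : ℝ) ≤ Real.log 2 := by linarith [Real.log_two_gt_d9]
  rw [← Real.exp_log two_pos, ← Real.exp_add]
  gcongr
  nlinarith [sq_nonneg (u - 1 / 2)]

theorem sum_exp_neg_pow_le {b : ℝ} (hb : 0 < b) (s : Finset ℕ) :
    ∑ n ∈ s, Real.exp (-b) ^ n ≤ 1 + b⁻¹ := by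
  have hr₀ : 0 ≤ Real.exp (-b) := Real.exp_nonneg _
  have hr₁ : Real.exp (-b) < 1 := Real.exp_lt_one_iff.2 (neg_neg_of_pos hb)
  have hr : Real.exp (-b) ≤ (1 + b)⁻¹ := by
    rw [Real.exp_neg]
    gcongr
    linarith [Real.add_one_le_exp b]
  calc ∑ n ∈ s, Real.exp (-b) ^ n ≤ (1 - Real.exp (-b))⁻¹ :=
        (tsum_geometric_of_lt_one hr₀ hr₁).symm ▸
          (summable_geometric_of_lt_one hr₀ hr₁).sum_le_tsum s fun n _ => pow_nonneg hr₀ n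
    _ ≤ (1 - (1 + b)⁻¹)⁻¹ := by
        gcongr
        exact sub_pos.2 (inv_lt_one_of_one_lt₀ (by linarith))
    _ = 1 + b⁻¹ := by
        have : 1 - (1 + b)⁻¹ = b / (1 + b) := by field_simp; ring
        rw [this]
        field_simp
        exact add_comm 1 b

variable {N : ℕ} [NeZero N]

theorem re_zmodAddEquiv_one (x : ZMod N) :
    (AddChar.zmodAddEquiv x 1).re = Real.cos (2 * Real.pi * x.val / N) := by
  have h : AddChar.zmodAddEquiv x 1 = AddChar.zmod N ((x.val : ℤ) : ZMod N) ((1 : ℤ) : ZMod N) := by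
    rw [Int.cast_natCast, ZMod.natCast_zmod_val, Int.cast_one]
    rfl
  rw [h, AddChar.zmod_intCast, Circle.coe_exp, Complex.exp_ofReal_mul_I_re]
  simp [mul_div_assoc]

theorem exp_re_zmodAddEquiv_le {t : ℝ} (ht : 0 ≤ t) {x : ZMod N} (hx : 2 * x.val ≤ N) :
    Real.exp (-(t * (1 - (AddChar.zmodAddEquiv x 1).re))) ≤
      2 * Real.exp (-(√(8 * t) / N)) ^ x.val := by
  have hx' : 2 * (x.val : ℝ) ≤ N := by exact_mod_cast hx
  have hN : (0 : ℝ) < N := Nat.cast_pos.2 (NeZero.pos N)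
  have hθ : |2 * Real.pi * x.val / N| = 2 * Real.pi * x.val / N := abs_of_nonneg (by positivity)
  have hθπ : |2 * Real.pi * x.val / N| ≤ Real.pi := by
    rw [hθ, div_le_iff₀ hN]
    nlinarith [Real.pi_pos]
  have hsqrt : √(8 * t) = 2 * √(2 * t) := by
    rw [show 8 * t = 2 ^ 2 * (2 * t) by ring, Real.sqrt_mul (by norm_num), Real.sqrt_sq two_pos.le]
  rw [re_zmodAddEquiv_one, ← Real.exp_nat_mul]
  convert exp_neg_mul_one_sub_cos_le ht hθπ using 3
  rw [hθ, hsqrt]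
  field_simp

theorem sum_addChar_zmod_exp_le {t : ℝ} (ht : 0 < t) :
    ∑ ψ : AddChar (ZMod N) ℂ, Real.exp (-(t * (1 - (ψ 1).re))) ≤ 4 * (1 + N / √(8 * t)) := by
  have hN : (0 : ℝ) < N := Nat.cast_pos.2 (NeZero.pos N)
  set f : ZMod N → ℝ := fun x => Real.exp (-(t * (1 - (AddChar.zmodAddEquiv x 1).re))) with hf
  set b := √(8 * t) / N with hb
  have hneg (x : ZMod N) : f (-x) = f x := by
    simp only [hf, map_neg, AddChar.neg_apply, AddChar.map_neg_eq_conj, Complex.conj_re]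
  have hhalf {x : ZMod N} (hx : 2 * x.val ≤ N) : f x ≤ 2 * Real.exp (-b) ^ x.val :=
    exp_re_zmodAddEquiv_le ht.le hx
  have hle (x : ZMod N) : f x ≤ 2 * (Real.exp (-b) ^ x.val + Real.exp (-b) ^ (-x).val) := by
    have h₀ : 0 ≤ Real.exp (-b) := Real.exp_nonneg _
    by_cases hx : 2 * x.val ≤ N
    · linarith [hhalf hx, pow_nonneg h₀ (-x).val]
    · have : 2 * (-x).val ≤ N := by
        rw [ZMod.neg_val]
        split_ifs <;> lia
      linarith [hneg x, hhalf this, pow_nonneg h₀ x.val]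
  have hgeom : ∑ x : ZMod N, Real.exp (-b) ^ x.val ≤ 1 + b⁻¹ := by
    rw [← Finset.sum_image (f := fun n => Real.exp (-b) ^ n) (ZMod.val_injective N).injOn]
    exact sum_exp_neg_pow_le (by positivity) _
  have hsymm : ∑ x : ZMod N, Real.exp (-b) ^ (-x).val = ∑ x : ZMod N, Real.exp (-b) ^ x.val :=
    Fintype.sum_equiv (Equiv.neg (ZMod N)) _ _ fun _ => rfl
  calc _ = ∑ x, f x := (Fintype.sum_equiv AddChar.zmodAddEquiv.toEquiv _ _ fun _ => rfl).symm
    _ ≤ ∑ x : ZMod N, 2 * (Real.exp (-b) ^ x.val + Real.exp (-b) ^ (-x).val) :=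
        Finset.sum_le_sum fun x _ => hle x
    _ = 4 * ∑ x : ZMod N, Real.exp (-b) ^ x.val := by
        rw [← Finset.mul_sum, Finset.sum_add_distrib, hsymm]
        ring
    _ ≤ 4 * (1 + b⁻¹) := by gcongr
    _ = _ := by rw [hb, inv_div]

end Cosine

section TorusHeatKernel

variable {ι : Type*} [Fintype ι] [DecidableEq ι] {N : ℕ} [NeZero N] {J : Finset ι}

theorem abs_charEigenvalue_projStep_le (hJ : J ≠ Finset.univ) (ψ : AddChar (J → ZMod N) ℂ) :
    |charEigenvalue (projStep (ZMod N) J) ψ| ≤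
      ∏ j : J, Real.exp (-((1 - (ψ (Pi.single j 1)).re) / Fintype.card ι ^ 2)) := by
  obtain ⟨i₀, hi₀⟩ : ∃ i₀, i₀ ∉ J := by simpa [Finset.eq_univ_iff_forall] using hJ
  have hsum : ∑ i, (1 - (ψ (projStep (ZMod N) J i)).re) =
      ∑ j : J, (1 - (ψ (Pi.single j 1)).re) := by
    rw [← Finset.sum_subset J.subset_univ fun i _ hi => by simp [projStep_of_notMem hi],
      ← Finset.sum_coe_sort J]
    simp only [projStep_coe]
  rw [charEigenvalue, ← Real.exp_sum, Finset.sum_neg_distrib, ← Finset.sum_div, ← hsum]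
  exact abs_sum_div_card_le_exp (i₀ := i₀)
    (fun i => (Complex.abs_re_le_norm _).trans (ψ.norm_apply _).le)
    (by simp [projStep_of_notMem hi₀])

theorem sum_addChar_zmod_exp_le_div_sqrt {k : ℕ} (hk : 1 ≤ k) (hkN : k ≤ N ^ 2) {n : ℝ}
    (hn : 0 < n) :
    (N : ℝ)⁻¹ * ∑ ψ : AddChar (ZMod N) ℂ, Real.exp (-(k / n ^ 2 * (1 - (ψ 1).re))) ≤
      (4 + 2 * n) / √k := by
  have hN : (0 : ℝ) < N := Nat.cast_pos.2 (NeZero.pos N)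
  have : (0 : ℝ) < k := by exact_mod_cast hk
  have hsqrt : √(8 * (k / n ^ 2)) = √8 * √k / n := by
    rw [mul_div_assoc', Real.sqrt_div (by positivity), Real.sqrt_mul (by norm_num),
      Real.sqrt_sq hn.le]
  have hsqrt8 : 2 ≤ √8 := Real.le_sqrt_of_sq_le (by norm_num)
  have hsqrtk : √k ≤ N := Real.sqrt_le_iff.2 ⟨hN.le, by exact_mod_cast hkN⟩
  calc _ ≤ (N : ℝ)⁻¹ * (4 * (1 + N / √(8 * (k / n ^ 2)))) := by
        gcongr
        exact sum_addChar_zmod_exp_le (by positivity)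
    _ = 4 / N + 4 * n / (√8 * √k) := by
        rw [hsqrt]
        field_simp
    _ ≤ 4 / √k + 4 * n / (2 * √k) := by gcongr
    _ = (4 + 2 * n) / √k := by
        field_simp
        ring

theorem walkProb_projStep_zmod_le (hJ : J ≠ Finset.univ) {k : ℕ} (hk : 1 ≤ k) (hkN : k ≤ N ^ 2)
    (x : J → ZMod N) :
    walkProb (projStep (ZMod N) J) k x ≤ ((4 + 2 * Fintype.card ι) / √k) ^ J.card := by
  set n : ℝ := (Fintype.card ι : ℝ) with hn
  have hn₀ : 0 < n := Nat.cast_pos.2 (Nat.zero_lt_of_lt ((Finset.card_lt_iff_ne_univ J).2 hJ))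
  set g : AddChar (ZMod N) ℂ → ℝ := fun ψ => Real.exp (-(k / n ^ 2 * (1 - (ψ 1).re)))
  calc walkProb (projStep (ZMod N) J) k x
      ≤ (Fintype.card (J → ZMod N) : ℝ)⁻¹ *
          ∑ ψ, |charEigenvalue (projStep (ZMod N) J) ψ| ^ k := walkProb_le_sum_addChar _ k x
    _ ≤ (Fintype.card (J → ZMod N) : ℝ)⁻¹ * ∑ ψ : AddChar (J → ZMod N) ℂ,
          ∏ j, g (ψ.compAddMonoidHom (AddMonoidHom.single (fun _ => ZMod N) j)) := by
        gcongr with ψ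
        refine (pow_le_pow_left₀ (abs_nonneg _) (abs_charEigenvalue_projStep_le hJ ψ) k).trans_eq ?_
        rw [← Finset.prod_pow]
        refine Finset.prod_congr rfl fun j _ => ?_
        rw [← Real.exp_nat_mul, mul_neg, mul_div_assoc', mul_div_right_comm]
        rfl
    _ ≤ (Fintype.card (J → ZMod N) : ℝ)⁻¹ * (∑ ψ, g ψ) ^ Fintype.card J := by
        gcongr
        exact sum_addChar_pi_prod_le fun ψ => Real.exp_nonneg _
    _ = ((N : ℝ)⁻¹ * ∑ ψ, g ψ) ^ J.card := by
        simp [mul_pow, ZMod.card]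
    _ ≤ _ := by
        gcongr
        exact sum_addChar_zmod_exp_le_div_sqrt hk hkN hn₀

end TorusHeatKernel

/-! ### Barrier on the cylinder -/

/-- The projection of the cylinder to the torus `(ℤ/Nℤ)^J` given by a set `J` of directions. -/
def cylProj (d N : ℕ) (J : Finset (Fin (d + 1))) : Cyl d N →+ (J → ZMod N) where
  toFun x := J.restrict (Fin.snoc (α := fun _ => ZMod N) x.1 (x.2 : ZMod N))
  map_zero' := by
    ext ⟨i, hi⟩
    induction i using Fin.lastCases <;> simp [Finset.restrict]
  map_add' x y := by
    ext ⟨i, hi⟩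
    induction i using Fin.lastCases <;> simp [Finset.restrict]

theorem cylProj_projE (d N : ℕ) (J : Finset (Fin (d + 1))) (v : Lat d) (i : J) :
    cylProj d N J (projE d N v) i = v i := by
  obtain ⟨i, hi⟩ := i
  induction i using Fin.lastCases <;> simp [cylProj, projE, Finset.restrict]

theorem cylProj_cylUnit (d N : ℕ) (J : Finset (Fin (d + 1))) (i : Fin (d + 1)) :
    cylProj d N J (cylUnit d N i) = projStep (ZMod N) J i := by
  ext j
  simp [cylUnit, cylProj_projE, projStep, Pi.single_apply]

theorem cylUnit_snd (d N : ℕ) (i : Fin (d + 1)) :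
    (cylUnit d N i).2 = if i = Fin.last d then 1 else 0 := by
  simp [cylUnit, projE, Pi.single_apply, eq_comm]

/-- A nonnegative function on the cylinder whose average over the neighbours drops by `1 / (d + 1)`
at every site of `Btl d N j`. -/
noncomputable def heightBarrier (d N : ℕ) (j : ℤ) (x : Cyl d N) : ℝ :=
  max 0 ((2 * N) ^ 2 - ((x.2 : ℝ) - j * N) ^ 2)

theorem heightBarrier_nonneg (d N : ℕ) (j : ℤ) : 0 ≤ heightBarrier d N j := fun _ =>
  le_max_left _ _

theorem heightBarrier_le (d N : ℕ) (j : ℤ) (x : Cyl d N) :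
    heightBarrier d N j x ≤ (2 * N) ^ 2 :=
  max_le (by positivity) (sub_le_self _ (sq_nonneg _))

theorem heightBarrier_eq {d N : ℕ} {j : ℤ} {x : Cyl d N} (hx : |x.2 - j * N| ≤ 2 * N) :
    heightBarrier d N j x = (2 * N) ^ 2 - ((x.2 : ℝ) - j * N) ^ 2 := by
  have hx' : |(x.2 : ℝ) - j * N| ≤ 2 * N := by exact_mod_cast hx
  exact max_eq_right (sub_nonneg.2 (sq_le_sq.2 (hx'.trans (le_abs_self _))))

theorem nbrAvg_heightBarrier {d N : ℕ} {j : ℤ} {x : Cyl d N} (hx : x ∈ Btl d N j) :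
    nbrAvg (cylUnit d N) (heightBarrier d N j) x = heightBarrier d N j x - 1 / (d + 1) := by
  obtain ⟨hlow, hup⟩ : (j - 2) * (N : ℤ) + 1 ≤ x.2 ∧ x.2 ≤ (j + 2) * (N : ℤ) - 1 := hx
  have hval (t : ℤ) (ht : |t| ≤ 1) {y : Cyl d N} (hy : y.2 = x.2 + t) :
      heightBarrier d N j y = (2 * N) ^ 2 - ((x.2 : ℝ) + t - j * N) ^ 2 := by
    obtain ⟨ht₁, ht₂⟩ := abs_le.1 ht
    rw [heightBarrier_eq (abs_le.2 ⟨by rw [hy]; linarith, by rw [hy]; linarith⟩), hy]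
    push_cast
    rfl
  have hvert : heightBarrier d N j (x + cylUnit d N (Fin.last d)) +
      heightBarrier d N j (x - cylUnit d N (Fin.last d)) = 2 * heightBarrier d N j x - 2 := by
    rw [hval 1 (by simp) (by simp [cylUnit_snd]), hval 0 (by simp) (add_zero x.2).symm,
      hval (-1) (by simp) (by simp [cylUnit_snd, sub_eq_add_neg])]
    push_cast
    ring
  have hhor (i : Fin d) : heightBarrier d N j (x + cylUnit d N i.castSucc) +
      heightBarrier d N j (x - cylUnit d N i.castSucc) = 2 * heightBarrier d N j x := by
    simp [heightBarrier, cylUnit_snd, Fin.castSucc_ne_last, two_mul]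
  rw [nbrAvg_apply, Fin.sum_univ_castSucc, hvert]
  simp only [hhor, Finset.sum_const, Finset.card_univ, Fintype.card_fin, nsmul_eq_mul]
  push_cast
  field_simp
  ring

/-- The weight of `heightBarrier` in `fibreBarrier`: `d + 1` times the bound for the probability of
any state at time `N ^ 2`. -/
noncomputable def barrierWeight (d N : ℕ) (J : Finset (Fin (d + 1))) : ℝ :=
  (d + 1) * ((4 + 2 * (d + 1)) / N) ^ J.card

theorem barrierWeight_nonneg (d N : ℕ) (J : Finset (Fin (d + 1))) : 0 ≤ barrierWeight d N J := by
  unfold barrierWeight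
  positivity

/-- The Green function of the projected walk up to time `N ^ 2`, corrected by a multiple of
`heightBarrier` that makes it superharmonic in `Btl d N j` off the fibre of `cylProj d N J`
over `y`. -/
noncomputable def fibreBarrier (d N : ℕ) (J : Finset (Fin (d + 1))) (j : ℤ) (y : J → ZMod N) :
    Cyl d N → ℝ :=
  (fun x => truncGreen (projStep (ZMod N) J) (N ^ 2) (cylProj d N J x + -y)) +
    barrierWeight d N J • heightBarrier d N j

theorem fibreBarrier_nonneg (d N : ℕ) (J : Finset (Fin (d + 1))) (j : ℤ) (y : J → ZMod N) :
    0 ≤ fibreBarrier d N J j y :=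
  add_nonneg (fun x => truncGreen_nonneg _ _ (cylProj d N J x + -y))
    (smul_nonneg (barrierWeight_nonneg d N J) (heightBarrier_nonneg d N j))

theorem fibreBarrier_of_cylProj_eq {d N : ℕ} {J : Finset (Fin (d + 1))} {y : J → ZMod N}
    {x : Cyl d N} (hx : cylProj d N J x = y) (j : ℤ) :
    fibreBarrier d N J j y x =
      truncGreen (projStep (ZMod N) J) (N ^ 2) 0 + barrierWeight d N J * heightBarrier d N j x := by
  simp [fibreBarrier, hx]

theorem nbrAvg_fibreBarrier_le {d N : ℕ} [NeZero N] {J : Finset (Fin (d + 1))}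
    (hJ : J ≠ Finset.univ) {j : ℤ} (y : J → ZMod N) {x : Cyl d N} (hx : x ∈ Btl d N j) :
    nbrAvg (cylUnit d N) (fibreBarrier d N J j y) x ≤
      fibreBarrier d N J j y x - if cylProj d N J x = y then 1 else 0 := by
  set green := truncGreen (projStep (ZMod N) J) (N ^ 2) with hgreen
  have havg : nbrAvg (cylUnit d N) (fun x => green (cylProj d N J x + -y)) x = _ := congrFun
    (nbrAvg_comp_add _ _ (cylProj d N J) (Equiv.refl _) (cylProj_cylUnit d N J) green (-y)) x
  have hwalk : walkProb (projStep (ZMod N) J) (N ^ 2) (cylProj d N J x + -y) ≤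
      barrierWeight d N J * (1 / (d + 1)) := by
    have hweight : barrierWeight d N J * (1 / (d + 1)) = ((4 + 2 * (d + 1)) / N) ^ J.card := by
      rw [barrierWeight]
      field_simp
    rw [hweight]
    simpa using walkProb_projStep_zmod_le hJ (Nat.one_le_pow 2 N (NeZero.pos N)) le_rfl _
  have hind : walkProb (projStep (ZMod N) J) 0 (cylProj d N J x + -y) =
      if cylProj d N J x = y then 1 else 0 := by
    simp [walkProb_zero, Set.indicator_apply, ← sub_eq_add_neg, sub_eq_zero]
  rw [fibreBarrier, ← hgreen, map_add, map_smul, Pi.add_apply, Pi.smul_apply,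
    nbrAvg_heightBarrier hx, havg, hgreen, nbrAvg_truncGreen, ← hgreen]
  simp only [Pi.add_apply, Pi.sub_apply, Pi.smul_apply, smul_eq_mul, mul_sub, hind]
  linarith

/-- An upper bound for the probability that the walk on the cylinder returns to a fibre of
`cylProj d N J` before leaving `Btl d N j`. -/
noncomputable def fibreReturnBound (d N : ℕ) (J : Finset (Fin (d + 1))) : ℝ :=
  1 - 1 / truncGreen (projStep (ZMod N) J) (N ^ 2) 0 + barrierWeight d N J * (2 * N) ^ 2

theorem isHitMajorant_fibreBarrier {d N : ℕ} [NeZero N] {J : Finset (Fin (d + 1))}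
    (hJ : J ≠ Finset.univ) (j : ℤ) (y : J → ZMod N) :
    IsHitMajorant (cylUnit d N) (Btl d N j) {x | cylProj d N J x = y} (fibreReturnBound d N J)
      ((truncGreen (projStep (ZMod N) J) (N ^ 2) 0)⁻¹ • fibreBarrier d N J j y ⊓ 1) := by
  set green₀ := truncGreen (projStep (ZMod N) J) (N ^ 2) 0 with hgreen₀
  have hone : 1 ≤ green₀ := one_le_truncGreen_zero _ (pow_pos (NeZero.pos N) 2)
  have hinv : 0 ≤ green₀⁻¹ := by positivity
  have hheight (x) : 0 ≤ barrierWeight d N J * heightBarrier d N j x :=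
    mul_nonneg (barrierWeight_nonneg d N J) (heightBarrier_nonneg d N j x)
  have havg {x} (hx : x ∈ Btl d N j) :=
    mul_le_mul_of_nonneg_left (nbrAvg_fibreBarrier_le hJ y hx) hinv
  refine isHitMajorant_inf_one (smul_nonneg hinv (fibreBarrier_nonneg d N J j y)) ?_ ?_ ?_
  all_goals rintro x ⟨hxB, hxF⟩
  · rw [Pi.smul_apply, smul_eq_mul, fibreBarrier_of_cylProj_eq hxF, ← hgreen₀,
      ← div_eq_inv_mul, one_le_div (by positivity)]
    exact le_add_of_nonneg_right (hheight x)
  · simpa [if_neg (show cylProj d N J x ≠ y from hxF)] using havg hxB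
  · rw [map_smul]
    calc green₀⁻¹ * nbrAvg (cylUnit d N) (fibreBarrier d N J j y) x
        ≤ green₀⁻¹ * (green₀ + barrierWeight d N J * heightBarrier d N j x - 1) := by
          simpa [fibreBarrier_of_cylProj_eq hxF, if_pos (show cylProj d N J x = y from hxF)]
            using havg hxB
      _ = 1 - 1 / green₀ + green₀⁻¹ * (barrierWeight d N J * heightBarrier d N j x) := by
          field_simp
          ring
      _ ≤ 1 - 1 / green₀ + barrierWeight d N J * heightBarrier d N j x :=
          add_le_add_right (mul_le_of_le_one_left (hheight x) (inv_le_one_of_one_le₀ hone)) _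
      _ ≤ fibreReturnBound d N J := by
          unfold fibreReturnBound
          gcongr
          exacts [barrierWeight_nonneg d N J, heightBarrier_le d N j x]

/-! ### The large torus limit -/

section Limit

variable {ι : Type*} [Fintype ι] [DecidableEq ι] {J : Finset ι}

theorem walkProb_projStep_int_le (hJ : J ≠ Finset.univ) {k : ℕ} (hk : 1 ≤ k) :
    walkProb (projStep ℤ J) k 0 ≤ ((4 + 2 * Fintype.card ι) / √k) ^ J.card := by
  rw [← walkProb_projStep_zmod k.lt_succ_self]
  exact walkProb_projStep_zmod_le hJ hk (by nlinarith) 0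

theorem summable_div_sqrt_pow (C : ℝ) {ν : ℕ} (hν : 3 ≤ ν) :
    Summable fun k : ℕ => (C / √k) ^ ν := by
  have hν' : (1 : ℝ) < ν / 2 := by
    have : (3 : ℝ) ≤ ν := by exact_mod_cast hν
    linarith
  refine ((Real.summable_one_div_nat_rpow.2 hν').mul_left (C ^ ν)).congr fun k => ?_
  rw [div_pow, Real.sqrt_eq_rpow, ← Real.rpow_mul_natCast (Nat.cast_nonneg k), mul_one_div]
  ring_nf

theorem summable_walkProb_projStep_int (hJ : J ≠ Finset.univ) (hν : 3 ≤ J.card) :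
    Summable fun k => walkProb (projStep ℤ J) k 0 :=
  (summable_nat_add_iff 1).1 <| Summable.of_nonneg_of_le (fun _ => walkProb_nonneg _ _ 0)
    (fun k => walkProb_projStep_int_le hJ (Nat.le_add_left 1 k))
    ((summable_nat_add_iff 1).2 (summable_div_sqrt_pow _ hν))

theorem tendsto_truncGreen_projStep_zmod (hJ : J ≠ Finset.univ) (hν : 3 ≤ J.card) :
    Tendsto (fun N : ℕ => truncGreen (projStep (ZMod N) J) (N ^ 2) 0) atTop
      (nhds (∑' k, walkProb (projStep ℤ J) k 0)) := by
  have hgreen (N : ℕ) : truncGreen (projStep (ZMod N) J) (N ^ 2) 0 =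
      ∑' k, if k < N ^ 2 then walkProb (projStep (ZMod N) J) k 0 else 0 := by
    rw [tsum_eq_sum (s := Finset.range (N ^ 2)) fun k hk => if_neg (by simpa using hk),
      truncGreen, Finset.sum_apply]
    exact Finset.sum_congr rfl fun k hk => (if_pos (Finset.mem_range.1 hk)).symm
  have hbound : Summable fun k : ℕ =>
      ((4 + 2 * Fintype.card ι) / √k) ^ J.card + if k = 0 then 1 else (0 : ℝ) :=
    (summable_div_sqrt_pow _ hν).add (hasSum_ite_eq 0 1).summable
  simp only [hgreen]
  refine tendsto_tsum_of_dominated_convergence hbound (fun k => ?_) ?_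
  · refine tendsto_const_nhds.congr' ?_
    filter_upwards [eventually_gt_atTop k] with N hN
    rw [if_pos (by nlinarith), walkProb_projStep_zmod hN]
  · filter_upwards [eventually_ge_atTop 1] with N hN k
    have : NeZero N := ⟨by lia⟩
    by_cases hkN : k < N ^ 2
    · rw [if_pos hkN, Real.norm_of_nonneg (walkProb_nonneg _ _ 0)]
      rcases Nat.eq_zero_or_pos k with rfl | hk
      · simp [walkProb_zero, show J.card ≠ 0 by lia]
      · simpa [hk.ne'] using walkProb_projStep_zmod_le hJ hk hkN.le 0
    · rw [if_neg hkN, norm_zero]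
      positivity

theorem one_le_tsum_walkProb_projStep_int (hJ : J ≠ Finset.univ) (hν : 3 ≤ J.card) :
    1 ≤ ∑' k, walkProb (projStep ℤ J) k 0 :=
  calc 1 = walkProb (projStep ℤ J) 0 0 := by simp [walkProb_zero]
    _ ≤ ∑' k, walkProb (projStep ℤ J) k 0 :=
      (summable_walkProb_projStep_int hJ hν).le_tsum 0 fun k _ => walkProb_nonneg _ k 0

theorem IsLatRW.one_sub_one_div_tsum_walkProb_le {ν : ℕ} {Q : ZLat ν → Measure (ℕ → ZLat ν)}
    (hQ : IsLatRW ν Q) (hJν : J.card = ν) (hJ : J ≠ Finset.univ) (hν : 3 ≤ ν) :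
    1 - 1 / ∑' k, walkProb (projStep ℤ J) k 0 ≤
      1 - ν / Fintype.card ι * (1 - retProb ν Q) := by
  have : NeZero ν := ⟨by lia⟩
  have hsum := summable_walkProb_projStep_int hJ (hJν.symm ▸ hν)
  have hone := one_le_tsum_walkProb_projStep_int hJ (hJν.symm ▸ hν)
  have hle : ν / Fintype.card ι * (1 - retProb ν Q) * ∑' k, walkProb (projStep ℤ J) k 0 ≤ 1 :=
    le_of_tendsto' (hsum.hasSum.tendsto_sum_nat.const_mul _) fun K => by
      simpa [truncGreen] using hQ.mul_truncGreen_projStep_le hJν K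
  gcongr
  rwa [le_div_iff₀ (by linarith)]

end Limit

section Limsup

variable {d : ℕ} {J : Finset (Fin (d + 1))}

theorem tendsto_barrierWeight_mul_sq (hν : 3 ≤ J.card) :
    Tendsto (fun N : ℕ => barrierWeight d N J * (2 * N) ^ 2) atTop (nhds 0) := by
  have hpow := (tendsto_pow_div_pow_atTop_zero (𝕜 := ℝ) (show 2 < J.card by lia)).comp
    tendsto_natCast_atTop_atTop
  refine (mul_zero ((d + 1) * (4 + 2 * (d + 1)) ^ J.card * 4 : ℝ) ▸ hpow.const_mul _).congr
    fun N => ?_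
  simp only [barrierWeight, Function.comp_apply, div_pow]
  ring

theorem tendsto_fibreReturnBound (hJ : J ≠ Finset.univ) (hν : 3 ≤ J.card) :
    Tendsto (fun N : ℕ => fibreReturnBound d N J) atTop
      (nhds (1 - 1 / ∑' k, walkProb (projStep ℤ J) k 0)) := by
  have hone := one_le_tsum_walkProb_projStep_int hJ hν
  have hgreen := (tendsto_const_nhds (x := (1 : ℝ))).div
    (tendsto_truncGreen_projStep_zmod hJ hν) (by linarith)
  rw [← add_zero (1 - 1 / _)]
  exact (hgreen.const_sub 1).add (tendsto_barrierWeight_mul_sq hν)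

theorem IsLatRW.eventually_fibreReturnBound_le {ν : ℕ} {Q : ZLat ν → Measure (ℕ → ZLat ν)}
    (hQ : IsLatRW ν Q) (hνd : ν ≤ d) (hν : 3 ≤ ν) {p : ℝ}
    (hp : 1 - ν / (d + 1) * (1 - retProb ν Q) < p) :
    ∀ᶠ N in atTop, ∀ J : Finset (Fin (d + 1)), J.card = ν → fibreReturnBound d N J ≤ p := by
  refine eventually_all.2 fun J => eventually_imp_distrib_left.2 fun hJν => ?_
  have hJ : J ≠ Finset.univ := by
    rintro rfl
    simp at hJν
    lia
  refine (tendsto_fibreReturnBound hJ (hJν.symm ▸ hν)).eventually_le_const ?_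
  refine (hQ.one_sub_one_div_tsum_walkProb_le hJν hJ hν).trans_lt ?_
  simpa using hp

theorem exists_subset_cylProj_eq {N m : ℕ} {j : ℤ} {A : Finset (Cyl d N)} (hA : A ∈ Adm d N j m) :
    ∃ J : Finset (Fin (d + 1)), J.card = d + 1 - m ∧
      ∃ y : J → ZMod N, ↑A ⊆ {x | cylProj d N J x = y} := by
  obtain ⟨-, -, _, ⟨I, hI, y, rfl⟩, hAF⟩ := hA
  refine ⟨Iᶜ, by simp [Finset.card_compl, hI], cylProj d N Iᶜ (projE d N y), fun x hx => ?_⟩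
  obtain ⟨v, hv, rfl⟩ := hAF hx
  ext i
  simp [cylProj_projE, hv i (Finset.mem_compl.1 i.2)]

variable {N m : ℕ} {P : Cyl d N → Measure (ℕ → Cyl d N)} {lam p : ℝ}

theorem IsCylRW.phiSup_le [NeZero N] (hP : IsCylRW d N P) (hm : 1 ≤ m) (hlam : 0 ≤ lam)
    (hp : Real.exp lam * p < 1)
    (hbound : ∀ J : Finset (Fin (d + 1)), J.card = d + 1 - m → fibreReturnBound d N J ≤ p)
    {j : ℤ} {A : Finset (Cyl d N)} (hA : A ∈ Adm d N j m) :
    phiSup d N P j lam A ≤ 1 + (Real.exp lam - 1) / (1 - Real.exp lam * p) := by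
  obtain ⟨J, hJm, y, hAJ⟩ := exists_subset_cylProj_eq hA
  have hJ : J ≠ Finset.univ := by
    rintro rfl
    simp at hJm
    lia
  exact ciSup_le <| hP.isMarkovFamily.integral_exp_card_hit_le_of_isHitMajorant
    ((isHitMajorant_fibreBarrier hJ j y).mono (hbound J hJm)) hlam hp hAJ

theorem neg_one_le_sSup_phiSup (d N m : ℕ) (P : Cyl d N → Measure (ℕ → Cyl d N)) (lam : ℝ) :
    -1 ≤ sSup {r : ℝ | ∃ j : ℤ, ∃ A ∈ Adm d N j m, r = phiSup d N P j lam A - 1} := by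
  set S := {r : ℝ | ∃ j : ℤ, ∃ A ∈ Adm d N j m, r = phiSup d N P j lam A - 1}
  have hS : ∀ r ∈ S, -1 ≤ r := by
    rintro r ⟨j, A, -, rfl⟩
    have : 0 ≤ phiSup d N P j lam A :=
      Real.iSup_nonneg fun z => integral_nonneg fun _ => Real.exp_nonneg _
    linarith
  rcases S.eq_empty_or_nonempty with hempty | ⟨r, hr⟩
  · simp [hempty]
  · by_cases hbdd : BddAbove S
    · exact (hS r hr).trans (le_csSup hbdd hr)
    · simp [Real.sSup_of_not_bddAbove hbdd]

theorem limsup_sSup_phiSup_le {P : ∀ N : ℕ, Cyl d N → Measure (ℕ → Cyl d N)}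
    (hP : ∀ N, IsCylRW d N (P N)) (hm : 1 ≤ m) (hlam : 0 ≤ lam) (hp : Real.exp lam * p < 1)
    (hbound : ∀ᶠ N in atTop, ∀ J : Finset (Fin (d + 1)), J.card = d + 1 - m →
      fibreReturnBound d N J ≤ p) :
    limsup (fun N : ℕ => sSup {r : ℝ | ∃ j : ℤ, ∃ A ∈ Adm d N j m,
      r = phiSup d N (P N) j lam A - 1}) atTop ≤ (Real.exp lam - 1) / (1 - Real.exp lam * p) := by
  refine limsup_le_of_le (IsBoundedUnder.isCoboundedUnder_le
    (isBoundedUnder_of ⟨-1, fun N => neg_one_le_sSup_phiSup d N m (P N) lam⟩)) ?_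
  filter_upwards [hbound, eventually_ge_atTop 1] with N hN hN₁
  have : NeZero N := ⟨by lia⟩
  refine Real.sSup_le ?_ (div_nonneg (by linarith [Real.one_le_exp hlam]) (by linarith))
  rintro r ⟨j, A, hA, rfl⟩
  linarith [(hP N).phiSup_le hm hlam hp hN hA]

end Limsup

/-- **(1.34).** For `d ≥ 3`, `1 ≤ m ≤ d-2` and `λ > 0` with `χ(λ) < 1`,
`limsup_N sup_{j∈ℤ, A∈A^j_m} (‖φ_j‖_∞ - 1) ≤ (e^λ - 1)/(1 - χ(λ))`. -/
theorem statement_7 (d m : ℕ) (hd : 3 ≤ d) (hm1 : 1 ≤ m) (hm2 : m ≤ d - 2)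
    (Q : ZLat (d + 1 - m) → Measure (ℕ → ZLat (d + 1 - m))) (hQ : IsLatRW (d + 1 - m) Q)
    (lam : ℝ) (hlam : 0 < lam)
    (hchi : Real.exp lam *
        ((m : ℝ) / (d + 1) + (1 - (m : ℝ) / (d + 1)) * retProb (d + 1 - m) Q) < 1)
    (Pl : ∀ N : ℕ, Cyl d N → Measure (ℕ → Cyl d N))
    (hPl : ∀ N : ℕ, IsCylRW d N (Pl N)) :
    limsup (fun N : ℕ =>
        sSup {r : ℝ | ∃ j : ℤ, ∃ A ∈ Adm d N j m,
          r = phiSup d N (Pl N) j lam A - 1}) atTop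
      ≤ (Real.exp lam - 1) /
          (1 - Real.exp lam *
            ((m : ℝ) / (d + 1) + (1 - (m : ℝ) / (d + 1)) * retProb (d + 1 - m) Q)) := by
  set q := retProb (d + 1 - m) Q
  have hχ : (m : ℝ) / (d + 1) + (1 - (m : ℝ) / (d + 1)) * q =
      1 - (d + 1 - m : ℕ) / (d + 1) * (1 - q) := by
    push_cast [show m ≤ d + 1 by lia]
    field_simp
    ring
  set χ := (m : ℝ) / (d + 1) + (1 - (m : ℝ) / (d + 1)) * q
  have hcont : ContinuousAt (fun p : ℝ => (Real.exp lam - 1) / (1 - Real.exp lam * p)) χ :=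
    ContinuousAt.div (by fun_prop) (by fun_prop) (by linarith)
  have hlt : ∀ᶠ p in nhdsWithin χ (Set.Ioi χ), Real.exp lam * p < 1 :=
    nhdsWithin_le_nhds ((continuous_const_mul _).continuousAt.eventually_lt_const hchi)
  refine ge_of_tendsto (hcont.tendsto.mono_left (nhdsWithin_le_nhds (s := Set.Ioi χ))) ?_
  filter_upwards [hlt, self_mem_nhdsWithin] with p hp hχp
  exact limsup_sSup_phiSup_le hPl hm1 hlam.le hp
    (hQ.eventually_fibreReturnBound_le (by lia) (by lia) (hχ ▸ hχp))

end DiscCyl
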